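/- arXiv:math/0012230 — 3 statements merged into one kernel-verified Lean document; each statement's English description precedes it below -/
import Mathlib

section
/- For all n ≥ 1, the number of walks on the slit plane of length 2n ending at (−1,1) equals C_{2n}/2, and the number of walks on the slit plane of length 2n ending at (1,1) equals 4^{n−1}·Cₙ + C_{2n}/2, where Cₘ = binom(2m,m)/(m+1) is the m-th Catalan number. (Walks of odd length ending at these points do not exist.) -/
open Filter

/-- The forbidden half-line `H = {(k,0) : k ≤ 0}`. -/
def slitH : Set (ℤ × ℤ) := {p : ℤ × ℤ | p.2 = 0 ∧ p.1 ≤ 0}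

/-- The four steps of the ordinary square lattice. -/
def sqSteps : Set (ℤ × ℤ) := {(1,0), (-1,0), (0,1), (0,-1)}

/-- The four diagonal steps. -/
def diagSteps : Set (ℤ × ℤ) := {(1,1), (1,-1), (-1,1), (-1,-1)}

/-- `w : Fin (n+1) → ℤ × ℤ` is a walk on the slit plane with steps in `A`. -/
def IsSlitWalk (A : Set (ℤ × ℤ)) (n : ℕ) (w : Fin (n+1) → ℤ × ℤ) : Prop :=
  w 0 = (0,0) ∧ (∀ m : Fin n, w m.succ - w m.castSucc ∈ A) ∧
    ∀ m : Fin (n+1), 1 ≤ (m : ℕ) → w m ∉ slitH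

/-- `a_{i,j}(n)`: the number of walks on the slit plane of length `n` ending at `(i,j)`. -/
noncomputable def slitCount (A : Set (ℤ × ℤ)) (i j : ℤ) (n : ℕ) : ℕ :=
  Nat.card {w : Fin (n+1) → ℤ × ℤ // IsSlitWalk A n w ∧ w (Fin.last n) = (i, j)}

namespace SlitAux

open Polynomial LaurentPolynomial

/-- `x + 1/x`. -/
noncomputable def uu : ℚ[T;T⁻¹] := T 1 + T (-1)

/-- positive part -/
noncomputable def posPart (f : ℚ[T;T⁻¹]) : ℚ[T;T⁻¹] :=
  AddMonoidAlgebra.ofCoeff (f.coeff.filter (fun i : ℤ => 0 < i))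

lemma posPart_coeff (f : ℚ[T;T⁻¹]) (i : ℤ) :
    (posPart f).coeff i = if 0 < i then f.coeff i else 0 := by
  simp [posPart, Finsupp.filter_apply]

lemma coeff_mul_T (f : ℚ[T;T⁻¹]) (m i : ℤ) : (f * T m).coeff i = f.coeff (i - m) := by
  have h := AddMonoidAlgebra.coeff_mul_single_apply f (1 : ℚ) m i
  rw [T, sub_eq_add_neg, h, mul_one]

lemma coeff_uu_mul (f : ℚ[T;T⁻¹]) (i : ℤ) :
    (uu * f).coeff i = f.coeff (i - 1) + f.coeff (i + 1) := by
  rw [mul_comm, uu, mul_add]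
  rw [AddMonoidAlgebra.coeff_add, Finsupp.add_apply, coeff_mul_T, coeff_mul_T]
  simp

/-- Laurent polynomial of walks of length `n` ending on height `j`. -/
noncomputable def L : ℕ → ℤ → ℚ[T;T⁻¹]
  | 0, j => if j = 0 then 1 else 0
  | n + 1, j => if j = 0 then posPart (uu * L n j + L n (j - 1) + L n (j + 1))
      else uu * L n j + L n (j - 1) + L n (j + 1)

lemma L_neg (n : ℕ) : ∀ j, L n (-j) = L n j := by
  induction n with
  | zero => intro j; simp [L]
  | succ n ih =>
    intro j
    have h1 : L n (-j - 1) = L n (j + 1) := by rw [← ih (j + 1)]; congr 1; ring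
    have h2 : L n (-j + 1) = L n (j - 1) := by rw [← ih (j - 1)]; congr 1; ring
    simp only [L, h1, h2, ih j, neg_eq_zero]
    rw [add_right_comm]

lemma posPart_zero : posPart 0 = 0 := by
  apply LaurentPolynomial.ext
  intro i; rw [posPart_coeff]; simp

lemma L_small (n : ℕ) : ∀ j : ℤ, (n : ℤ) < j → L n j = 0 := by
  induction n with
  | zero => intro j hj; have : j ≠ 0 := by rintro rfl; simp at hj
            simp [L, this]
  | succ n ih =>
    intro j hj
    push_cast at hj
    have : j ≠ 0 := by omega
    simp [L, this, ih j (by omega), ih (j-1) (by omega), ih (j+1) (by omega)]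

lemma L_zero_pos (n : ℕ) (i : ℤ) (hi : i < 0) : (L n 0).coeff i = 0 := by
  cases n with
  | zero =>
    simp only [L, if_true, ← T_zero, T_apply]
    rw [if_neg (by omega)]
  | succ n => simp only [L, if_true, posPart_coeff]; rw [if_neg (by omega)]

lemma L_zero_zero (n : ℕ) : (L n 0).coeff 0 = if n = 0 then 1 else 0 := by
  cases n with
  | zero => simp only [L, if_true, ← T_zero, T_apply]
  | succ n => simp [L, posPart_coeff]

lemma L_parity (n : ℕ) : ∀ i j : ℤ, (i + j + n) % 2 = 1 → (L n j).coeff i = 0 := by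
  induction n with
  | zero =>
    intro i j h
    simp only [L]
    split_ifs with hj
    · rw [← T_zero, T_apply, if_neg]
      rintro rfl; subst hj; simp at h
    · simp
  | succ n ih =>
    intro i j h
    push_cast at h
    have key : (uu * L n j + L n (j - 1) + L n (j + 1)).coeff i = 0 := by
      rw [AddMonoidAlgebra.coeff_add, AddMonoidAlgebra.coeff_add, Finsupp.add_apply, Finsupp.add_apply,
        coeff_uu_mul, ih (i-1) j (by omega), ih (i+1) j (by omega), ih i (j-1) (by omega),
        ih i (j+1) (by omega)]
      simp
    simp only [L]
    split_ifs with hj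
    · rw [posPart_coeff, key]; simp
    · exact key

lemma L_succ_coeff (n : ℕ) (i j : ℤ) : (L (n+1) j).coeff i =
    if j = 0 ∧ i ≤ 0 then 0 else
      (L n j).coeff (i-1) + (L n j).coeff (i+1) + (L n (j-1)).coeff i + (L n (j+1)).coeff i := by
  have key : (uu * L n j + L n (j - 1) + L n (j + 1)).coeff i =
    (L n j).coeff (i-1) + (L n j).coeff (i+1) + (L n (j-1)).coeff i + (L n (j+1)).coeff i := by
      rw [AddMonoidAlgebra.coeff_add, AddMonoidAlgebra.coeff_add, Finsupp.add_apply, Finsupp.add_apply,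
        coeff_uu_mul]
  rw [← key]
  simp only [L]
  by_cases hj : j = 0
  · rw [if_pos hj, posPart_coeff]
    by_cases hi : 0 < i
    · rw [if_pos hi, if_neg (by omega)]
    · rw [if_neg hi, if_pos (by omega)]
  · rw [if_neg hj, if_neg (by omega)]

/-! Counting -/

/-- walks to `p` -/
def W (n : ℕ) (p : ℤ × ℤ) : Type :=
  {w : Fin (n+1) → ℤ × ℤ // IsSlitWalk sqSteps n w ∧ w (Fin.last n) = p}

/-- the steps -/
def st : Fin 4 → ℤ × ℤ := ![(1,0), (-1,0), (0,1), (0,-1)]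

lemma st_mem (s : Fin 4) : st s ∈ sqSteps := by
  fin_cases s <;> simp [st, sqSteps]

lemma st_surj (x : ℤ × ℤ) (hx : x ∈ sqSteps) : ∃ s, st s = x := by
  simp only [sqSteps, Set.mem_insert_iff, Set.mem_singleton_iff] at hx
  rcases hx with h | h | h | h
  · exact ⟨0, by simp [st, h]⟩
  · exact ⟨1, by simp [st, h]⟩
  · exact ⟨2, by simp [st, h]⟩
  · exact ⟨3, by simp [st, h]⟩

lemma st_inj : Function.Injective st := by
  decide

/-- extend a walk by a step -/
def ext (n : ℕ) (p : ℤ × ℤ) (hp : p ∉ slitH) : (Σ s : Fin 4, W n (p - st s)) → W (n+1) p :=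
  fun x => ⟨Fin.snoc (α := fun _ => ℤ × ℤ) x.2.1 p, by
    obtain ⟨s, w, ⟨h0, h1, h2⟩, h3⟩ := x
    refine ⟨⟨?_, ?_, ?_⟩, by simp⟩
    · have : (0 : Fin (n+1+1)) = Fin.castSucc 0 := rfl
      rw [this, Fin.snoc_castSucc]; exact h0
    · intro m
      refine Fin.lastCases ?_ (fun m => ?_) m
      · rw [Fin.snoc_castSucc, Fin.succ_last, Fin.snoc_last]
        simp only [h3]
        simpa using st_mem s
      · rw [Fin.snoc_castSucc, Fin.succ_castSucc, Fin.snoc_castSucc]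
        exact h1 m
    · intro m
      refine Fin.lastCases ?_ (fun m => ?_) m
      · intro _; rw [Fin.snoc_last]; exact hp
      · intro hm; rw [Fin.snoc_castSucc]; exact h2 m (by simpa using hm)⟩

lemma ext_bij (n : ℕ) (p : ℤ × ℤ) (hp : p ∉ slitH) : Function.Bijective (ext n p hp) := by
  constructor
  · rintro ⟨s, w, hw⟩ ⟨s', w', hw'⟩ h
    have h' := congrArg Subtype.val h
    simp only [ext] at h'
    have hww : w = w' := by
      funext m
      have := congrFun h' m.castSucc
      rwa [Fin.snoc_castSucc, Fin.snoc_castSucc] at this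
    subst hww
    have : st s = st s' := by
      have := hw.2.symm.trans hw'.2
      simpa using this
    have := st_inj this
    subst this
    rfl
  · rintro ⟨w, ⟨h0, h1, h2⟩, h3⟩
    obtain ⟨s, hs⟩ := st_surj _ (h1 (Fin.last n))
    refine ⟨⟨s, fun m => w m.castSucc, ⟨h0, fun m => ?_, fun m hm => ?_⟩, ?_⟩, ?_⟩
    · exact h1 m.castSucc
    · exact h2 m.castSucc (by simpa using hm)
    · rw [hs, Fin.succ_last, h3]; simp
    · apply Subtype.ext
      funext m
      refine Fin.lastCases ?_ (fun m => ?_) m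
      · simp only [ext]; rw [Fin.snoc_last, h3]
      · simp only [ext]; rw [Fin.snoc_castSucc]

lemma W_count (n : ℕ) : ∀ i j : ℤ, Finite (W n (i,j)) ∧
    (Nat.card (W n (i,j)) : ℚ) = (L n j).coeff i := by
  induction n with
  | zero =>
    intro i j
    by_cases h : i = 0 ∧ j = 0
    · obtain ⟨rfl, rfl⟩ := h
      have hu : Nonempty (Unique (W 0 (0,0))) := ⟨{
        default := ⟨fun _ => (0,0), ⟨rfl, fun m => m.elim0, fun m hm => by omega⟩, rfl⟩
        uniq := by
          rintro ⟨w, hw, hw'⟩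
          apply Subtype.ext
          funext m
          have : m = 0 := Fin.ext (by omega)
          subst this
          exact hw.1 }⟩
      obtain ⟨hu⟩ := hu
      refine ⟨inferInstance, ?_⟩
      rw [Nat.card_unique, L_zero_zero]; simp
    · have he : IsEmpty (W 0 (i,j)) := ⟨by
        rintro ⟨w, hw, hw'⟩
        have h1 := hw.1
        have h2 : w 0 = (i,j) := hw'
        rw [h1] at h2
        simp at h2
        exact h ⟨h2.1.symm, h2.2.symm⟩⟩
      refine ⟨inferInstance, ?_⟩
      rw [Nat.card_of_isEmpty]
      simp only [L]
      split_ifs with hj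
      · rw [← T_zero, T_apply, if_neg (by omega)]; simp
      · simp
  | succ n ih =>
    intro i j
    by_cases h : j = 0 ∧ i ≤ 0
    · have he : IsEmpty (W (n+1) (i,j)) := ⟨by
        rintro ⟨w, hw, hw'⟩
        apply hw.2.2 (Fin.last (n+1)) (by simp)
        rw [hw']; exact h⟩
      refine ⟨inferInstance, ?_⟩
      rw [Nat.card_of_isEmpty, L_succ_coeff, if_pos h]; simp
    · have hp : (i,j) ∉ slitH := h
      have hf : ∀ s, Finite (W n ((i,j) - st s)) := fun s => (ih _ _).1
      have hb := ext_bij n (i,j) hp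
      refine ⟨Finite.of_surjective _ hb.2, ?_⟩
      rw [← Nat.card_eq_of_bijective _ hb, Nat.card_sigma, L_succ_coeff, if_neg h, Fin.sum_univ_four]
      push_cast
      simp only [← (ih _ _).2]
      simp [st]

lemma slitCount_eq (n : ℕ) (i j : ℤ) : (slitCount sqSteps i j n : ℚ) = (L n j).coeff i :=
  (W_count n i j).2

/-! Power series -/

/-- generating function of walks ending at height `j` -/
noncomputable def S (j : ℤ) : PowerSeries ℚ[T;T⁻¹] := PowerSeries.mk fun n => L n j

/-- `x + 1/x` as a series -/
noncomputable def U : PowerSeries ℚ[T;T⁻¹] := PowerSeries.C uu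

lemma S_rec (j : ℤ) (hj : j ≠ 0) :
    S j = PowerSeries.X * (U * S j + S (j - 1) + S (j + 1)) := by
  ext1 n
  cases n with
  | zero => simp [S, L, hj]
  | succ n =>
    rw [PowerSeries.coeff_succ_X_mul]
    simp [S, L, hj, U]

/-- the invariant -/
noncomputable def Q (j : ℤ) : PowerSeries ℚ[T;T⁻¹] :=
  PowerSeries.X * S (j+1)^2 - (1 - PowerSeries.X * U) * S j * S (j+1) + PowerSeries.X * S j ^ 2

lemma Q_succ (j : ℕ) : Q (j + 1 : ℤ) = Q j := by
  have h := S_rec (j + 1 : ℤ) (by omega)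
  rw [add_sub_cancel_right] at h
  simp only [Q]
  linear_combination (S j - S ((j:ℤ) + 1 + 1)) * h

lemma Q_const (j : ℕ) : Q j = Q 0 := by
  induction j with
  | zero => rfl
  | succ n ih => rw [← ih, ← Q_succ n]; norm_num

lemma X_pow_dvd_S (j : ℕ) : PowerSeries.X ^ j ∣ S j := by
  rw [PowerSeries.X_pow_dvd_iff]
  intro m hm
  simp only [S, PowerSeries.coeff_mk]
  exact L_small m j (by exact_mod_cast hm)

lemma Q_zero : Q 0 = 0 := by
  ext1 n
  have h : PowerSeries.X ^ (n+1) ∣ Q 0 := by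
    rw [← Q_const (n+1)]
    have h1 := X_pow_dvd_S (n+1)
    simp only [Q]
    refine dvd_add (dvd_sub ?_ ?_) ?_
    · have h2 := (pow_dvd_pow _ (Nat.le_succ (n+1))).trans (X_pow_dvd_S (n+1+1))
      push_cast at h2 ⊢
      rw [sq]
      exact (h2.mul_right _).mul_left _
    · exact (h1.mul_left _).mul_right _
    · rw [sq]; exact (h1.mul_left _).mul_left _
  rw [PowerSeries.X_pow_dvd_iff] at h
  simpa using h n (by omega)

/-- `1 - B` -/
noncomputable def Bs : PowerSeries ℚ[T;T⁻¹] :=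
  (1 - PowerSeries.X * U) * S 0 - PowerSeries.X * (2 * S 1)

lemma Bs_sq : Bs ^ 2 = ((1 - PowerSeries.X * U)^2 - 4 * PowerSeries.X ^ 2) * S 0 ^ 2 := by
  have h := Q_zero
  simp only [Q, zero_add] at h
  simp only [Bs]
  linear_combination 4 * PowerSeries.X * h

lemma Bs_coeff_zero : PowerSeries.coeff 0 Bs = 1 := by
  simp [Bs, S, L]

lemma Bs_coeff_succ (n : ℕ) : PowerSeries.coeff (n+1) Bs = L (n+1) 0 - (uu * L n 0 + 2 * L n 1) := by
  have : Bs = S 0 - PowerSeries.X * (U * S 0 + 2 * S 1) := by rw [Bs]; ring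
  rw [this, map_sub, PowerSeries.coeff_succ_X_mul, map_add]
  have h2 : (2 : PowerSeries ℚ[T;T⁻¹]) = PowerSeries.C 2 := (map_ofNat PowerSeries.C 2).symm
  rw [h2, U, PowerSeries.coeff_C_mul, PowerSeries.coeff_C_mul]
  simp [S]

lemma coeff_add' (f g : ℚ[T;T⁻¹]) (i : ℤ) : (f + g).coeff i = f.coeff i + g.coeff i := by
  rw [AddMonoidAlgebra.coeff_add, Finsupp.add_apply]

lemma coeff_sub' (f g : ℚ[T;T⁻¹]) (i : ℤ) : (f - g).coeff i = f.coeff i - g.coeff i := by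
  rw [AddMonoidAlgebra.coeff_sub, Finsupp.sub_apply]

lemma Bs_coeff_coeff (n : ℕ) (i : ℤ) : (PowerSeries.coeff (n+1) Bs).coeff i =
    (L (n+1) 0).coeff i - ((L n 0).coeff (i-1) + (L n 0).coeff (i+1) + 2 * (L n 1).coeff i) := by
  rw [Bs_coeff_succ, two_mul]
  rw [coeff_sub', coeff_add', coeff_uu_mul, coeff_add']
  ring

lemma Bs_pos (n : ℕ) (i : ℤ) (hi : 0 < i) : (PowerSeries.coeff n Bs).coeff i = 0 := by
  cases n with
  | zero => rw [Bs_coeff_zero, ← T_zero, T_apply, if_neg (by omega)]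
  | succ n =>
    rw [Bs_coeff_coeff, L_succ_coeff, if_neg (by omega)]
    have : L n (0 - 1) = L n 1 := by rw [← L_neg n 1]; norm_num
    rw [this, zero_add]
    ring

lemma coeff_trunc (f : ℚ[T;T⁻¹]) (n : ℕ) : (trunc f).coeff n = f.coeff n := by
  simp [trunc, Polynomial.coeff, Polynomial.toFinsuppIso]

lemma coeff_toLaurent_nat (f : ℚ[X]) (n : ℕ) : (toLaurent f).coeff (n : ℤ) = f.coeff n := by
  have := Polynomial.trunc_toLaurent f
  rw [← coeff_trunc, this]

lemma coeff_toLaurent_neg (f : ℚ[X]) (i : ℤ) (hi : i < 0) : (toLaurent f).coeff i = 0 := by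
  by_contra h
  have h1 : i ∈ (toLaurent f).coeff.support := Finsupp.mem_support_iff.2 h
  rw [support_coeff_toLaurent] at h1
  simp at h1
  omega

lemma toLaurent_trunc (f : ℚ[T;T⁻¹]) (hf : ∀ i < 0, f.coeff i = 0) : toLaurent (trunc f) = f := by
  apply LaurentPolynomial.ext
  intro i
  rcases lt_or_ge i 0 with h | h
  · rw [coeff_toLaurent_neg _ _ h, hf i h]
  · lift i to ℕ using h
    rw [coeff_toLaurent_nat, coeff_trunc]

/-- `x ↦ 1/x` embedding -/
noncomputable def toInv : ℚ[X] →+* ℚ[T;T⁻¹] :=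
  (invert (R := ℚ)).toRingEquiv.toRingHom.comp toLaurent

lemma toInv_apply (f : ℚ[X]) : toInv f = invert (toLaurent f) := rfl

lemma sep (p q : ℚ[X]) (h : toLaurent p = toInv q) :
    p = Polynomial.C (p.coeff 0) ∧ q = Polynomial.C (p.coeff 0) := by
  have h1 : ∀ i : ℤ, (toLaurent p).coeff i = (toLaurent q).coeff (-i) := by
    intro i; rw [h, toInv_apply, invert_apply]
  constructor
  · ext n
    rw [Polynomial.coeff_C]
    split_ifs with hn
    · rw [hn]
    · rw [← coeff_toLaurent_nat, h1, coeff_toLaurent_neg _ _ (by omega)]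
  · ext n
    rw [Polynomial.coeff_C]
    have := h1 (-n)
    rw [neg_neg, coeff_toLaurent_nat] at this
    rw [← this]
    split_ifs with hn
    · subst hn; exact coeff_toLaurent_nat p 0
    · rw [coeff_toLaurent_neg _ _ (by omega)]

/-- coefficient of `x^k` -/
noncomputable def xc (k : ℕ) (f : PowerSeries ℚ[X]) : PowerSeries ℚ :=
  PowerSeries.mk fun n => (PowerSeries.coeff n f).coeff k

lemma xc_mul (k : ℕ) (f g : PowerSeries ℚ[X]) :
    xc k (f * g) = ∑ x ∈ Finset.HasAntidiagonal.antidiagonal k, xc x.1 f * xc x.2 g := by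
  ext n
  simp only [xc, PowerSeries.coeff_mk, PowerSeries.coeff_mul, map_sum, Polynomial.finsetSum_coeff,
    Polynomial.coeff_mul]
  rw [Finset.sum_comm]

lemma xc0_mul (f g : PowerSeries ℚ[X]) : xc 0 (f * g) = xc 0 f * xc 0 g := by
  simp [xc_mul]

lemma xc1_mul (f g : PowerSeries ℚ[X]) : xc 1 (f * g) = xc 0 f * xc 1 g + xc 1 f * xc 0 g := by
  rw [xc_mul, Finset.Nat.sum_antidiagonal_eq_sum_range_succ_mk]
  simp [Finset.sum_range_succ]

lemma xc2_mul (f g : PowerSeries ℚ[X]) :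
    xc 2 (f * g) = xc 0 f * xc 2 g + xc 1 f * xc 1 g + xc 2 f * xc 0 g := by
  rw [xc_mul, Finset.Nat.sum_antidiagonal_eq_sum_range_succ_mk]
  simp [Finset.sum_range_succ]

/-- constants in `x` -/
noncomputable def Pc : PowerSeries ℚ →+* PowerSeries ℚ[X] := PowerSeries.map Polynomial.C

lemma xc_Pc (k : ℕ) (f : PowerSeries ℚ) : xc k (Pc f) = if k = 0 then f else 0 := by
  ext n
  simp only [xc, Pc, PowerSeries.coeff_mk, PowerSeries.coeff_map, Polynomial.coeff_C]
  split_ifs <;> simp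

lemma xc_one (k : ℕ) : xc k 1 = if k = 0 then 1 else 0 := by
  rw [← map_one Pc, xc_Pc]

lemma xc_X (k : ℕ) : xc k (PowerSeries.C Polynomial.X) = if k = 1 then 1 else 0 := by
  ext n
  simp only [xc, PowerSeries.coeff_mk, PowerSeries.coeff_C]
  split_ifs with h1 h2 h2
  · subst h1 h2; simp
  · subst h1; simp [Polynomial.coeff_X]; omega
  · subst h2; simp [PowerSeries.coeff_one, h1]
  · simp

lemma xc_sub (k : ℕ) (f g : PowerSeries ℚ[X]) : xc k (f - g) = xc k f - xc k g := by
  ext n; simp [xc]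

lemma sep_series (f g : PowerSeries ℚ[X])
    (h : PowerSeries.map toLaurent f = PowerSeries.map toInv g) :
    f = Pc (xc 0 f) ∧ g = Pc (xc 0 f) := by
  have h1 : ∀ n, _ := fun n => sep (PowerSeries.coeff n f) (PowerSeries.coeff n g) (by
    have := congrArg (PowerSeries.coeff n) h
    simpa using this)
  constructor
  · ext1 n; simpa [Pc, xc] using (h1 n).1
  · ext1 n; simpa [Pc, xc] using (h1 n).2

/-! The Catalan side -/

/-- Catalan series -/
noncomputable def cc : PowerSeries ℚ := PowerSeries.map (Nat.castRingHom ℚ) PowerSeries.catalanSeries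

/-- Catalan series at `-t` -/
noncomputable def dd : PowerSeries ℚ := PowerSeries.evalNegHom cc

lemma cc_coeff (n : ℕ) : PowerSeries.coeff n cc = (catalan n : ℚ) := by
  simp [cc]

lemma dd_coeff (n : ℕ) : PowerSeries.coeff n dd = (-1)^n * (catalan n : ℚ) := by
  simp [dd, PowerSeries.evalNegHom, PowerSeries.coeff_rescale, cc_coeff]

lemma cc_eq : cc = 1 + PowerSeries.X * cc ^ 2 := by
  have h := congrArg (PowerSeries.map (Nat.castRingHom ℚ)) PowerSeries.catalanSeries_sq_mul_X_add_one
  simp only [map_add, map_mul, map_pow, map_one, PowerSeries.map_X] at h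
  change cc ^ 2 * PowerSeries.X + 1 = cc at h
  linear_combination -h

lemma dd_eq : dd = 1 - PowerSeries.X * dd ^ 2 := by
  have h := congrArg (PowerSeries.evalNegHom (A := ℚ)) cc_eq
  simp only [map_add, map_mul, map_pow, map_one, PowerSeries.evalNegHom_X] at h
  change dd = 1 + -PowerSeries.X * dd ^ 2 at h
  linear_combination h

/-- `C(4t²)` -/
noncomputable def ee : PowerSeries ℚ := PowerSeries.expand 2 two_ne_zero (PowerSeries.rescale 4 cc)

lemma ee_coeff (n : ℕ) : PowerSeries.coeff (2 * n) ee = 4 ^ n * (catalan n : ℚ) := by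
  rw [ee, PowerSeries.coeff_expand_mul, PowerSeries.coeff_rescale, cc_coeff]

lemma ee_eq : ee = 1 + 4 * PowerSeries.X ^ 2 * ee ^ 2 := by
  have h := congrArg (fun f => PowerSeries.expand 2 two_ne_zero (PowerSeries.rescale 4 f)) cc_eq
  simp only [map_add, map_mul, map_pow, map_one, PowerSeries.rescale_X, PowerSeries.expand_X,
    PowerSeries.expand_C] at h
  change ee = 1 + PowerSeries.C 4 * PowerSeries.X ^ 2 * ee ^ 2 at h
  rwa [map_ofNat] at h

lemma eq_of_sq (f g : PowerSeries ℚ) (h : f ^ 2 = g ^ 2) (hf : PowerSeries.constantCoeff f = 1)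
    (hg : PowerSeries.constantCoeff g = 1) : f = g := by
  rcases sq_eq_sq_iff_eq_or_eq_neg.1 h with h | h
  · exact h
  · rw [h, map_neg, hg] at hf; norm_num at hf

lemma cc_const : PowerSeries.constantCoeff cc = 1 := by
  rw [← PowerSeries.coeff_zero_eq_constantCoeff_apply, cc_coeff]; simp

lemma dd_const : PowerSeries.constantCoeff dd = 1 := by
  rw [← PowerSeries.coeff_zero_eq_constantCoeff_apply, dd_coeff]; simp

lemma ee_rel : 8 * PowerSeries.X ^ 2 * ee = 2 * PowerSeries.X * (cc - dd) +
    4 * PowerSeries.X ^ 2 * cc * dd := by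
  have h : (1 - 8 * PowerSeries.X ^ 2 * ee) =
      (1 - 2 * PowerSeries.X * cc) * (1 + 2 * PowerSeries.X * dd) := by
    apply eq_of_sq
    · have h1 : (1 - 2 * PowerSeries.X * cc)^2 = 1 - 4 * PowerSeries.X := by
        linear_combination (-4 * PowerSeries.X) * cc_eq
      have h2 : (1 + 2 * PowerSeries.X * dd)^2 = 1 + 4 * PowerSeries.X := by
        linear_combination (4 * PowerSeries.X) * dd_eq
      rw [mul_pow, h1, h2]
      linear_combination (-16 * PowerSeries.X ^ 2) * ee_eq
    · simp
    · simp
  linear_combination -h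

/-! Factorisation -/

lemma factor1 {A : Type*} [CommRing A] (t c x y : A) (hxy : x * y = 1) (hc : c = 1 + t * c ^ 2) :
    1 - 2 * t - t * (x + y) = (1 - t * c) ^ 2 * ((1 - (c - 1) * x) * (1 - (c - 1) * y)) := by
  have h1 : (1 - (c - 1) * x) * (1 - (c - 1) * y) = c ^ 2 * (1 - 2 * t - t * (x + y)) := by
    linear_combination (c - 1) ^ 2 * hxy - (2 + (x + y)) * hc
  have h2 : (1 - t * c) * c = 1 := by linear_combination hc
  rw [h1]
  linear_combination -(1 - 2 * t - t * (x + y)) * ((1 - t * c) * c + 1) * h2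

lemma factor2 {A : Type*} [CommRing A] (t c d x y : A) (hxy : x * y = 1) (hc : c = 1 + t * c ^ 2)
    (hd : d = 1 - t * d ^ 2) :
    (1 - t * (x + y)) ^ 2 - 4 * t ^ 2 = ((1 - t * c) * (1 + t * d)) ^ 2 *
      ((1 - (c - 1) * x) * (1 - (1 - d) * x)) * ((1 - (c - 1) * y) * (1 - (1 - d) * y)) := by
  have h1 := factor1 t c x y hxy hc
  have h2 := factor1 (-t) d (-x) (-y) (by linear_combination hxy) (by linear_combination hd)
  have : (1 - t * (x + y)) ^ 2 - 4 * t ^ 2 =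
    (1 - 2 * t - t * (x + y)) * (1 - 2 * (-t) - (-t) * (-x + -y)) := by ring
  rw [this, h1, h2]; ring

/-- `Δ₊` -/
noncomputable def DD : PowerSeries ℚ[X] :=
  (1 - Pc (cc - 1) * PowerSeries.C Polynomial.X) * (1 - Pc (1 - dd) * PowerSeries.C Polynomial.X)

/-- inverse of `C(t)C(-t)` -/
noncomputable def qq : PowerSeries ℚ := (1 - PowerSeries.X * cc) * (1 + PowerSeries.X * dd)

lemma qq_mul : qq * (cc * dd) = 1 := by
  have h1 : (1 - PowerSeries.X * cc) * cc = 1 := by linear_combination cc_eq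
  have h2 : (1 + PowerSeries.X * dd) * dd = 1 := by linear_combination dd_eq
  rw [qq]; linear_combination (1 + PowerSeries.X * dd) * dd * h1 + h2

/-- constants -/
noncomputable def kk : PowerSeries ℚ →+* PowerSeries ℚ[T;T⁻¹] := PowerSeries.map LaurentPolynomial.C

lemma map_toLaurent_Pc (f : PowerSeries ℚ) : PowerSeries.map toLaurent (Pc f) = kk f := by
  ext1 n; simp [Pc, kk]

lemma map_toInv_Pc (f : PowerSeries ℚ) : PowerSeries.map toInv (Pc f) = kk f := by
  ext1 n; simp [Pc, kk, toInv_apply]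

lemma kk_X : kk PowerSeries.X = PowerSeries.X := by simp [kk]

lemma delta_factor : (1 - PowerSeries.X * U)^2 - 4 * PowerSeries.X ^ 2 =
    kk qq ^ 2 * PowerSeries.map toLaurent DD * PowerSeries.map toInv DD := by
  have hxy : (PowerSeries.C (T 1 : ℚ[T;T⁻¹])) * PowerSeries.C (T (-1)) = 1 := by
    rw [← map_mul, ← T_add]; simp
  have hc := congrArg kk cc_eq
  have hd := congrArg kk dd_eq
  simp only [map_add, map_sub, map_mul, map_pow, map_one, kk_X] at hc hd
  have h := factor2 PowerSeries.X (kk cc) (kk dd) _ _ hxy hc hd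
  have hU : U = PowerSeries.C (T 1) + PowerSeries.C (T (-1)) := by rw [U, uu, map_add]
  have h1 : PowerSeries.map toLaurent (PowerSeries.C (Polynomial.X : ℚ[X])) = PowerSeries.C (T 1) := by
    simp
  have h2 : PowerSeries.map toInv (PowerSeries.C (Polynomial.X : ℚ[X])) = PowerSeries.C (T (-1)) := by
    simp [toInv_apply]
  rw [hU, h, DD, qq]
  simp only [map_mul, map_sub, map_one, map_add, h1, h2, map_toLaurent_Pc, map_toInv_Pc, kk_X]

/-- `S_0` as polynomial-valued series -/
noncomputable def S0 : PowerSeries ℚ[X] := PowerSeries.mk fun n => trunc (L n 0)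

/-- `1 - B` as polynomial-valued series in `1/x` -/
noncomputable def B0 : PowerSeries ℚ[X] :=
  PowerSeries.mk fun n => trunc (invert (PowerSeries.coeff n Bs))

lemma map_S0 : PowerSeries.map toLaurent S0 = S 0 := by
  ext1 n
  simp only [S0, S, PowerSeries.coeff_map, PowerSeries.coeff_mk]
  exact toLaurent_trunc _ (fun i hi => L_zero_pos n i hi)

lemma map_B0 : PowerSeries.map toInv B0 = Bs := by
  ext1 n
  simp only [B0, PowerSeries.coeff_map, PowerSeries.coeff_mk, toInv_apply]
  rw [toLaurent_trunc]
  · exact involutive_invert _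
  · intro i hi
    rw [invert_apply]
    exact Bs_pos n _ (by omega)

lemma xc_S0 (k n : ℕ) : PowerSeries.coeff n (xc k S0) = (L n 0).coeff k := by
  simp [xc, S0, coeff_trunc]

lemma xc_B0 (k n : ℕ) : PowerSeries.coeff n (xc k B0) = (PowerSeries.coeff n Bs).coeff (-k) := by
  simp [xc, B0, coeff_trunc]

lemma xc0_S0 : xc 0 S0 = 1 := by
  ext n
  rw [xc_S0, PowerSeries.coeff_one]
  exact L_zero_zero n

lemma xc0_D : xc 0 DD = 1 := by
  simp [DD, xc0_mul, xc_sub, xc_one, xc_Pc, xc_X]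

lemma xc1_D : xc 1 DD = -(cc - dd) := by
  simp only [DD, xc1_mul, xc0_mul, xc_sub, xc_one, xc_Pc, xc_X]
  norm_num
  try ring

lemma xc2_D : xc 2 DD = (cc - 1) * (1 - dd) := by
  simp only [DD, xc2_mul, xc1_mul, xc0_mul, xc_sub, xc_one, xc_Pc, xc_X]
  norm_num
  try ring

lemma DD_unit : ∃ N, DD * N = 1 := by
  have : IsUnit DD := by
    rw [PowerSeries.isUnit_iff_constantCoeff]
    have : PowerSeries.constantCoeff DD = 1 := by
      have h1 : PowerSeries.constantCoeff (Pc (cc - 1)) = 0 := by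
        rw [Pc, ← PowerSeries.coeff_zero_eq_constantCoeff_apply, PowerSeries.coeff_map,
          map_sub, cc_coeff]
        simp
      have h2 : PowerSeries.constantCoeff (Pc (1 - dd)) = 0 := by
        rw [Pc, ← PowerSeries.coeff_zero_eq_constantCoeff_apply, PowerSeries.coeff_map,
          map_sub, dd_coeff]
        simp
      rw [DD]
      generalize Pc (cc - 1) = f at h1
      generalize Pc (1 - dd) = g at h2
      simp [h1, h2]
    rw [this]; exact isUnit_one
  exact this.exists_right_inv

lemma main_eqs : S0 ^ 2 * DD = 1 ∧ B0 ^ 2 = Pc qq ^ 2 * DD := by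
  obtain ⟨N, hN⟩ := DD_unit
  have hq := congrArg kk qq_mul
  rw [map_mul, map_one] at hq
  have hN' := congrArg (PowerSeries.map toInv) hN
  rw [map_mul, map_one] at hN'
  have h : PowerSeries.map toLaurent (S0 ^ 2 * DD) =
      PowerSeries.map toInv (B0 ^ 2 * N * Pc (cc * dd) ^ 2) := by
    simp only [map_mul _ (_ * _), map_mul _ (_ ^ _), map_pow]
    rw [map_S0, map_B0, map_toInv_Pc, Bs_sq, delta_factor]
    generalize kk qq = q at *
    generalize kk (cc * dd) = r at *
    generalize PowerSeries.map toInv DD = a at *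
    generalize PowerSeries.map toInv N = b at *
    linear_combination -(S 0)^2 * (PowerSeries.map toLaurent DD) * (q * r) ^ 2 * hN' -
      (S 0)^2 * (PowerSeries.map toLaurent DD) * (q * r + 1) * hq
  obtain ⟨h1, h2⟩ := sep_series _ _ h
  have h3 : xc 0 (S0 ^ 2 * DD) = 1 := by
    rw [sq, xc0_mul, xc0_mul, xc0_S0, xc0_D]; simp
  rw [h3, map_one] at h1 h2
  refine ⟨h1, ?_⟩
  have hq2 := congrArg Pc qq_mul
  rw [map_mul, map_one] at hq2
  linear_combination (Pc qq ^ 2 * DD) * h2 - B0 ^ 2 * (Pc qq * Pc (cc * dd)) ^ 2 * hN -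
    B0 ^ 2 * (Pc qq * Pc (cc * dd) + 1) * hq2

lemma s1_eq : 2 * xc 1 S0 = cc - dd := by
  have h := congrArg (xc 1) main_eqs.1
  rw [sq, xc1_mul, xc1_mul, xc0_mul, xc0_S0, xc0_D, xc1_D, xc_one] at h
  norm_num at h
  linear_combination h

lemma s2_eq : 2 * xc 2 S0 + xc 1 S0 ^ 2 - 2 * xc 1 S0 * (cc - dd) + (cc - 1) * (1 - dd) = 0 := by
  have h := congrArg (xc 2) main_eqs.1
  rw [sq, xc2_mul, xc2_mul, xc1_mul, xc0_mul, xc0_S0, xc0_D, xc1_D, xc2_D, xc_one] at h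
  norm_num at h
  linear_combination h

lemma qq_const : PowerSeries.constantCoeff qq = 1 := by simp [qq]

lemma b0_eq : xc 0 B0 = qq := by
  have h := congrArg (xc 0) main_eqs.2
  rw [sq, xc0_mul, sq, xc0_mul, xc0_mul, xc0_D, xc_Pc] at h
  norm_num at h
  apply eq_of_sq
  · linear_combination h
  · rw [← PowerSeries.coeff_zero_eq_constantCoeff_apply, xc_B0, Bs_coeff_zero, ← T_zero, T_apply]; simp
  · exact qq_const

lemma b1_eq : 2 * xc 1 B0 = - (PowerSeries.X * (cc + dd)) := by
  have h := congrArg (xc 1) main_eqs.2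
  rw [sq, xc1_mul, sq, xc1_mul, xc1_mul, xc0_mul, xc0_D, xc1_D, xc_Pc, xc_Pc, b0_eq] at h
  norm_num at h
  have hq0 : qq ≠ 0 := by
    intro h0; have := qq_const; rw [h0] at this; simp at this
  have h2 : qq * (2 * xc 1 B0) = qq * (-(qq * (cc - dd))) := by linear_combination h
  have h3 := mul_left_cancel₀ hq0 h2
  have h1 : (1 - PowerSeries.X * cc) * cc = 1 := by linear_combination cc_eq
  have h2 : (1 + PowerSeries.X * dd) * dd = 1 := by linear_combination dd_eq
  rw [h3, qq]
  linear_combination -(1 + PowerSeries.X * dd) * h1 + (1 - PowerSeries.X * cc) * h2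

lemma a_left (m : ℕ) (hm : m ≠ 0) :
    4 * (L m 1).coeff (-1) = catalan m + (-1) ^ m * (catalan m : ℚ) := by
  have h := congrArg (PowerSeries.coeff (m+1)) b1_eq
  have h2 : (2 : PowerSeries ℚ) = PowerSeries.C 2 := (map_ofNat PowerSeries.C 2).symm
  rw [map_neg, PowerSeries.coeff_succ_X_mul, map_add, cc_coeff, dd_coeff, h2,
    PowerSeries.coeff_C_mul, xc_B0, Bs_coeff_coeff] at h
  have e1 := L_zero_pos (m+1) (-((1:ℕ):ℤ)) (by norm_num)
  have e2 := L_zero_pos m (-((1:ℕ):ℤ) - 1) (by norm_num)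
  have e3 : (L m 0).coeff (-((1:ℕ):ℤ) + 1) = 0 := by
    have := L_zero_zero m
    rw [if_neg hm] at this
    simpa using this
  rw [e1, e2, e3] at h
  push_cast at h
  linear_combination -h

/-- generating function of walks ending at `(1,1)` -/
noncomputable def AA : PowerSeries ℚ := PowerSeries.mk fun n => (L n 1).coeff 1

lemma AA_rec : xc 1 S0 = PowerSeries.X * (1 + xc 2 S0 + 2 * AA) := by
  ext m
  have h2 : (2 : PowerSeries ℚ) = PowerSeries.C 2 := (map_ofNat PowerSeries.C 2).symm
  cases m with
  | zero =>
    rw [xc_S0]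
    simp only [L, if_true, ← T_zero, T_apply]
    simp
  | succ m =>
    rw [xc_S0, PowerSeries.coeff_succ_X_mul, h2, map_add, map_add, PowerSeries.coeff_C_mul, xc_S0,
      L_succ_coeff, if_neg (by omega), PowerSeries.coeff_one, ← L_zero_zero m, AA,
      PowerSeries.coeff_mk]
    have : L m (0 - 1) = L m 1 := by rw [← L_neg m 1]; norm_num
    rw [this]
    norm_num
    ring

lemma AA_eq : 4 * AA = ee + cc + dd - 3 := by
  have hX : (8 * PowerSeries.X ^ 2 : PowerSeries ℚ) ≠ 0 := by
    have : (8 : PowerSeries ℚ) ≠ 0 := by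
      rw [← map_ofNat (PowerSeries.C (R := ℚ)) 8]
      intro h
      have := congrArg PowerSeries.constantCoeff h
      simp at this
    exact mul_ne_zero this (pow_ne_zero _ PowerSeries.X_ne_zero)
  apply mul_left_cancel₀ hX
  have h1 := s1_eq
  have h2 := s2_eq
  have h3 := AA_rec
  have h4 := ee_rel
  have hc := cc_eq
  have hd := dd_eq
  generalize xc 1 S0 = s at *
  generalize xc 2 S0 = r at *
  generalize cc = c at *
  generalize dd = d at *
  generalize (PowerSeries.X : PowerSeries ℚ) = t at *
  linear_combination (-16 * t) * h3 - 8 * t ^ 2 * h2 + 8 * t * h1 +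
    2 * t ^ 2 * (2 * s - 3 * (c - d)) * h1 + 6 * t * hc - 6 * t * hd - h4

lemma a_right (n : ℕ) (hn : 1 ≤ n) :
    2 * (L (2 * n) 1).coeff 1 = 2 * 4 ^ (n - 1) * catalan n + (catalan (2 * n) : ℚ) := by
  have h := congrArg (PowerSeries.coeff (2 * n)) AA_eq
  have h4 : (4 : PowerSeries ℚ) = PowerSeries.C 4 := (map_ofNat PowerSeries.C 4).symm
  have h3 : (3 : PowerSeries ℚ) = PowerSeries.C 3 := (map_ofNat PowerSeries.C 3).symm
  rw [h4, h3, PowerSeries.coeff_C_mul, map_sub, map_add, map_add, ee_coeff, cc_coeff, dd_coeff,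
    PowerSeries.coeff_C, if_neg (by omega), AA, PowerSeries.coeff_mk, pow_mul] at h
  obtain ⟨k, rfl⟩ : ∃ k, n = k + 1 := ⟨n - 1, by omega⟩
  simp only [Nat.add_sub_cancel]
  rw [pow_succ] at h
  norm_num at h ⊢
  linear_combination h / 2

end SlitAux

/-- for `n ≥ 1`, `a_{-1,1}(2n) = C_{2n}/2` and
`a_{1,1}(2n) = 4^{n-1}·Cₙ + C_{2n}/2` (stated multiplied by 2 to stay in ℕ);
walks of odd length ending at these points do not exist. -/
theorem slit_count_diag_endpoints (n : ℕ) (hn : 1 ≤ n) :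
    2 * slitCount sqSteps (-1) 1 (2 * n) = catalan (2 * n)
    ∧ 2 * slitCount sqSteps 1 1 (2 * n) = 2 * 4 ^ (n - 1) * catalan n + catalan (2 * n)
    ∧ (∀ m : ℕ, slitCount sqSteps (-1) 1 (2 * m + 1) = 0)
    ∧ (∀ m : ℕ, slitCount sqSteps 1 1 (2 * m + 1) = 0) := by
  open SlitAux in
  refine ⟨?_, ?_, ?_, ?_⟩
  · have h := a_left (2 * n) (by omega)
    rw [← slitCount_eq, pow_mul] at h
    norm_num at h
    have : (2 * slitCount sqSteps (-1) 1 (2 * n) : ℚ) = catalan (2 * n) := by linear_combination h / 2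
    exact_mod_cast this
  · have h := a_right n hn
    rw [← slitCount_eq] at h
    exact_mod_cast h
  · intro m
    have h := slitCount_eq (2 * m + 1) (-1) 1
    rw [L_parity _ _ _ (by push_cast; omega)] at h
    exact_mod_cast h
  · intro m
    have h := slitCount_eq (2 * m + 1) 1 1
    rw [L_parity _ _ _ (by push_cast; omega)] at h
    exact_mod_cast h
end

section
/- For walks on the slit plane with diagonal steps: for all n ≥ 0, the number of such walks of length 2n+1 ending at (1,1) equals C_{2n+1}; the number of such walks of length 2n+1 ending at (−1,1) equals 2·4ⁿ·Cₙ − C_{2n+1}; and for all n ≥ 1, the number of such walks of length 2n ending at (0,2) equals C_{2n}. Here Cₘ = binom(2m,m)/(m+1) is the m-th Catalan number. -/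
open Filter

open LaurentPolynomial

/-- keep the exponents satisfying `0 < i` -/
noncomputable def posL (f : LaurentPolynomial ℤ) : LaurentPolynomial ℤ :=
  AddMonoidAlgebra.ofCoeff (f.coeff.filter (fun i : ℤ => 0 < i))

lemma posL_coeff (f : LaurentPolynomial ℤ) (i : ℤ) :
    (posL f).coeff i = if 0 < i then f.coeff i else 0 := by
  simp [posL, Finsupp.filter_apply]

/-- `x + x⁻¹` -/
noncomputable def xx : LaurentPolynomial ℤ := LaurentPolynomial.T 1 + LaurentPolynomial.T (-1)

lemma one_coeff (i : ℤ) : (1 : LaurentPolynomial ℤ).coeff i = if i = 0 then 1 else 0 := by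
  have := LaurentPolynomial.C_apply (1 : ℤ) i
  rwa [map_one] at this

lemma T_mul_coeff (k : ℤ) (f : LaurentPolynomial ℤ) (i : ℤ) :
    (LaurentPolynomial.T k * f).coeff i = f.coeff (i - k) := by
  rw [LaurentPolynomial.T, AddMonoidAlgebra.coeff_single_mul_apply, one_mul, neg_add_eq_sub]

lemma xx_mul_coeff (f : LaurentPolynomial ℤ) (i : ℤ) :
    (xx * f).coeff i = f.coeff (i - 1) + f.coeff (i + 1) := by
  rw [xx, add_mul, AddMonoidAlgebra.coeff_add, Finsupp.add_apply, T_mul_coeff, T_mul_coeff]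
  simp

/-- row polynomials of the walk counts -/
noncomputable def SW : ℕ → ℤ → LaurentPolynomial ℤ
  | 0, j => if j = 0 then 1 else 0
  | n + 1, j => if j = 0 then posL (xx * (SW n (j - 1) + SW n (j + 1)))
      else xx * (SW n (j - 1) + SW n (j + 1))

def dstep : Fin 4 → ℤ × ℤ := ![(1,1), (1,-1), (-1,1), (-1,-1)]

lemma dstep_inj : Function.Injective dstep := by decide

lemma mem_diag (p : ℤ × ℤ) : p ∈ diagSteps ↔ ∃ s, dstep s = p := by
  simp [diagSteps, dstep, Fin.exists_fin_succ, eq_comm]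

abbrev WS (n : ℕ) (p : ℤ × ℤ) : Type :=
  {w : Fin (n+1) → ℤ × ℤ // IsSlitWalk diagSteps n w ∧ w (Fin.last n) = p}

lemma snoc_walk {n : ℕ} {p : ℤ × ℤ} (hp : p ∉ slitH) (s : Fin 4) (w : WS n (p - dstep s)) :
    IsSlitWalk diagSteps (n+1) (Fin.snoc (α := fun _ => ℤ × ℤ) w.1 p) ∧
      (Fin.snoc (α := fun _ => ℤ × ℤ) w.1 p : Fin (n+2) → ℤ × ℤ) (Fin.last (n+1)) = p := by
  have h0 := w.2.1.1
  have h1 := w.2.1.2.1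
  have h2 := w.2.1.2.2
  have h3 := w.2.2
  refine ⟨⟨?_, ?_, ?_⟩, by simp⟩
  · have := Fin.snoc_castSucc (α := fun _ => ℤ × ℤ) p w.1 0
    exact this.trans h0
  · intro m
    induction m using Fin.lastCases with
    | last =>
      rw [Fin.succ_last, Fin.snoc_last, Fin.snoc_castSucc, h3, mem_diag]
      exact ⟨s, by simp⟩
    | cast m =>
      rw [← Fin.castSucc_succ, Fin.snoc_castSucc, Fin.snoc_castSucc]; exact h1 m
  · intro m hm
    induction m using Fin.lastCases with
    | last => simpa using hp
    | cast m => rw [Fin.snoc_castSucc]; exact h2 m hm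

lemma WS_bij {n : ℕ} {p : ℤ × ℤ} (hp : p ∉ slitH) :
    Function.Bijective (fun x : (Σ s : Fin 4, WS n (p - dstep s)) =>
      (⟨Fin.snoc (α := fun _ => ℤ × ℤ) x.2.1 p, snoc_walk hp x.1 x.2⟩ : WS (n+1) p)) := by
  constructor
  · rintro ⟨s, w⟩ ⟨s', w'⟩ h
    have h1 := congrArg (fun u : WS (n+1) p => (Fin.init u.1 : Fin (n+1) → ℤ × ℤ)) h
    simp only [Fin.init_snoc] at h1
    have h2 : p - dstep s = p - dstep s' := by
      rw [← w.2.2, ← w'.2.2, h1]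
    have h3 : s = s' := dstep_inj (by simpa using h2)
    subst h3
    have : w = w' := Subtype.ext h1
    rw [this]
  · rintro ⟨w, ⟨h0, h1, h2⟩, h3⟩
    have hl := h1 (Fin.last n)
    rw [mem_diag] at hl
    obtain ⟨s, hs⟩ := hl
    rw [Fin.succ_last, h3] at hs
    refine ⟨⟨s, ⟨Fin.init w, ⟨?_, ?_, ?_⟩, ?_⟩⟩, ?_⟩
    · exact h0
    · intro m
      have := h1 m.castSucc
      exact this
    · intro m hm
      exact h2 m.castSucc hm
    · rw [hs]; rw [sub_sub_cancel]; rfl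
    · apply Subtype.ext
      simp only
      rw [← h3]
      exact Fin.snoc_init_self w

lemma WS_count (n : ℕ) : ∀ i j : ℤ,
    Finite (WS n (i, j)) ∧ (Nat.card (WS n (i,j)) : ℤ) = (SW n j).coeff i := by
  induction n with
  | zero =>
    intro i j
    have hsub : Subsingleton (WS 0 (i, j)) := by
      constructor
      rintro ⟨w, hw⟩ ⟨w', hw'⟩
      apply Subtype.ext
      funext m
      have : m = 0 := Fin.ext (by have := m.2; simp)
      rw [this]
      exact hw.1.1.trans hw'.1.1.symm
    refine ⟨inferInstance, ?_⟩
    by_cases h : i = 0 ∧ j = 0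
    · obtain ⟨rfl, rfl⟩ := h
      have : Nonempty (WS 0 (0, 0)) := ⟨⟨fun _ => (0,0), ⟨rfl, fun m => m.elim0, fun m hm => by omega⟩, rfl⟩⟩
      have h1 : Nat.card (WS 0 (0,0)) = 1 := Nat.card_unique
      rw [h1]
      simp [SW]
    · have : IsEmpty (WS 0 (i, j)) := by
        constructor
        rintro ⟨w, hw, hw'⟩
        have := hw.1.symm.trans hw'
        simp at this
        exact h ⟨this.1.symm, this.2.symm⟩
      rw [Nat.card_of_isEmpty]
      by_cases hj : j = 0
      · have : (0:ℤ) ≠ i := fun hi => h ⟨hi.symm, hj⟩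
        simp [SW, one_coeff, hj, this.symm]
      · simp [SW, hj]
  | succ n ih =>
    intro i j
    by_cases hp : (i, j) ∈ slitH
    · have : IsEmpty (WS (n+1) (i, j)) := by
        constructor
        rintro ⟨w, hw, hw'⟩
        exact hw.2.2 (Fin.last (n+1)) (by simp) (hw' ▸ hp)
      refine ⟨inferInstance, ?_⟩
      rw [Nat.card_of_isEmpty]
      simp only [slitH, Set.mem_ofPred_eq] at hp
      simp [SW, hp.1, posL_coeff, not_lt.mpr hp.2]
    · have e := Equiv.ofBijective _ (WS_bij (n := n) hp)
      have hf : ∀ s : Fin 4, Finite (WS n ((i,j) - dstep s)) := fun s => (ih _ _).1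
      refine ⟨Finite.of_equiv _ e, ?_⟩
      rw [← Nat.card_congr e, Nat.card_sigma]
      have hc : ∀ s : Fin 4, (Nat.card (WS n ((i,j) - dstep s)) : ℤ)
        = (SW n (j - (dstep s).2)).coeff (i - (dstep s).1) := fun s => (ih _ _).2
      push_cast
      simp only [hc]
      have hS : (SW (n+1) j).coeff i = (xx * (SW n (j - 1) + SW n (j + 1))).coeff i := by
        by_cases hj : j = 0
        · have : 0 < i := by
            by_contra h
            exact hp ⟨hj, not_lt.mp h⟩
          simp [SW, hj, posL_coeff, this]
        · simp [SW, hj]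
      rw [hS, xx_mul_coeff]
      simp [Fin.sum_univ_four, dstep]
      ring

lemma slitCount_eq (i j : ℤ) (n : ℕ) :
    (slitCount diagSteps i j n : ℤ) = (SW n j).coeff i := (WS_count n i j).2


section cat
variable (K : Type*) [CommRing K]

/-- the Catalan series over `K` -/
noncomputable def catK : PowerSeries K := PowerSeries.map (Nat.castRingHom K) PowerSeries.catalanSeries

lemma catK_eq : catK K = 1 + PowerSeries.X * catK K ^ 2 := by
  have := congrArg (PowerSeries.map (Nat.castRingHom K)) PowerSeries.catalanSeries_sq_mul_X_add_one
  simp only [map_add, map_mul, map_pow, PowerSeries.map_X, map_one] at this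
  rw [catK]
  linear_combination -this

lemma catK_coeff (n : ℕ) : PowerSeries.coeff n (catK K) = (catalan n : K) := by
  simp [catK]

/-- a solution of `c = 1 + w t² c²` -/
noncomputable def catW (w : K) : PowerSeries K :=
  PowerSeries.expand 2 two_ne_zero (PowerSeries.rescale w (catK K))

lemma catW_eq (w : K) :
    catW K w = 1 + PowerSeries.C w * PowerSeries.X ^ 2 * catW K w ^ 2 := by
  have := congrArg (fun f => PowerSeries.expand 2 two_ne_zero (PowerSeries.rescale w f)) (catK_eq K)
  simp only [map_add, map_mul, map_pow, map_one, PowerSeries.rescale_X, PowerSeries.expand_X,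
    PowerSeries.expand_C] at this
  exact this

lemma catW_coeff (w : K) (n : ℕ) :
    PowerSeries.coeff (2 * n) (catW K w) = w ^ n * (catalan n : K) := by
  rw [catW, PowerSeries.coeff_expand_mul, PowerSeries.coeff_rescale, catK_coeff]

/-- even part -/
noncomputable def catE : PowerSeries K :=
  PowerSeries.mk (fun n => if Even n then (catalan n : K) else 0)
/-- odd part -/
noncomputable def catO : PowerSeries K :=
  PowerSeries.mk (fun n => if Even n then 0 else (catalan n : K))

lemma map_catE {K' : Type*} [CommRing K'] (f : K →+* K') :
    PowerSeries.map f (catE K) = catE K' := by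
  ext n
  simp only [catE, PowerSeries.coeff_map, PowerSeries.coeff_mk]
  split_ifs <;> simp

lemma map_catO {K' : Type*} [CommRing K'] (f : K →+* K') :
    PowerSeries.map f (catO K) = catO K' := by
  ext n
  simp only [catO, PowerSeries.coeff_map, PowerSeries.coeff_mk]
  split_ifs <;> simp

end cat

lemma cat_split : catE ℤ + catO ℤ = catK ℤ := by
  ext n
  simp only [catE, catO, map_add, PowerSeries.coeff_mk, catK_coeff]
  split_ifs <;> simp

lemma cat_split' : catE ℤ - catO ℤ = PowerSeries.rescale (-1) (catK ℤ) := by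
  ext n
  simp only [catE, catO, map_sub, PowerSeries.coeff_mk, PowerSeries.coeff_rescale, catK_coeff]
  split_ifs with h
  · simp [h.neg_one_pow]
  · simp [(Nat.not_even_iff_odd.mp h).neg_one_pow]

lemma catE_eqZ : catE ℤ = 1 + 2 * PowerSeries.X * catE ℤ * catO ℤ := by
  have h1 := catK_eq ℤ
  have h2 := congrArg (PowerSeries.rescale (-1 : ℤ)) h1
  simp only [map_add, map_mul, map_pow, map_one, PowerSeries.rescale_X, map_neg] at h2
  rw [← cat_split'] at h2
  rw [← cat_split] at h1
  have h3 : (2 : PowerSeries ℤ) * catE ℤ = 2 * (1 + 2 * PowerSeries.X * catE ℤ * catO ℤ) := by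
    linear_combination h1 + h2
  have h20 : (2 : PowerSeries ℤ) ≠ 0 := by
    intro h
    have := congrArg PowerSeries.constantCoeff h
    rw [map_ofNat, map_zero] at this
    norm_num at this
  exact mul_left_cancel₀ h20 h3

lemma catO_eqZ : catO ℤ = PowerSeries.X * (catE ℤ ^ 2 + catO ℤ ^ 2) := by
  have h1 := catK_eq ℤ
  rw [← cat_split] at h1
  linear_combination h1 - catE_eqZ

section cat2
variable (K : Type*) [CommRing K]

lemma catE_eq : catE K * (1 - 2 * PowerSeries.X * catO K) = 1 := by
  have h := congrArg (PowerSeries.map (Int.castRingHom K)) catE_eqZ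
  simp only [map_add, map_mul, map_one, map_ofNat, PowerSeries.map_X, map_catE, map_catO] at h
  linear_combination h

lemma catO_eq : catO K = PowerSeries.X * (catE K ^ 2 + catO K ^ 2) := by
  have h := congrArg (PowerSeries.map (Int.castRingHom K)) catO_eqZ
  simpa only [map_add, map_mul, map_pow, PowerSeries.map_X, map_catE, map_catO] using h

/-- `E² = 1 - 4 t² Ce²` -/
lemma cat_d : (1 - 2 * PowerSeries.X * catO K) ^ 2 = 1 - 4 * PowerSeries.X ^ 2 * catE K ^ 2 := by
  linear_combination -4 * PowerSeries.X * catO_eq K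

lemma catE_sq : catE K ^ 2 = 1 + 4 * PowerSeries.X ^ 2 * (catE K ^ 2) ^ 2 := by
  have h := catE_eq K
  have h2 := cat_d K
  have h3 : catE K ^ 2 * (1 - 2 * PowerSeries.X * catO K) ^ 2 = 1 := by
    rw [← mul_pow, h, one_pow]
  rw [h2] at h3
  linear_combination h3
end cat2

lemma unique_quad {f g : PowerSeries ℤ} (hf : f = 1 + 4 * PowerSeries.X ^ 2 * f ^ 2)
    (hg : g = 1 + 4 * PowerSeries.X ^ 2 * g ^ 2) : f = g := by
  have h : (f - g) * (1 - PowerSeries.X * (4 * PowerSeries.X * (f + g))) = 0 := by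
    linear_combination hf - hg
  rcases mul_eq_zero.mp h with h | h
  · exact sub_eq_zero.mp h
  · have := congrArg (PowerSeries.coeff 0) h
    simp at this

lemma catE_sq_coeff (n : ℕ) : PowerSeries.coeff (2 * n) (catE ℤ ^ 2) = 4 ^ n * (catalan n : ℤ) := by
  rw [unique_quad (catE_sq ℤ) (g := catW ℤ 4) (by
    have := catW_eq ℤ 4
    rwa [show (PowerSeries.C (4:ℤ)) = (4 : PowerSeries ℤ) by simp] at this)]
  exact catW_coeff ℤ 4 n


lemma SW_zero (j : ℤ) : SW 0 j = if j = 0 then 1 else 0 := by rw [SW]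
lemma SW_succ_zero (n : ℕ) : SW (n+1) 0 = posL (xx * (SW n (-1) + SW n 1)) := by
  simp [SW]
lemma SW_succ (n : ℕ) {j : ℤ} (hj : j ≠ 0) :
    SW (n+1) j = xx * (SW n (j - 1) + SW n (j + 1)) := by
  simp [SW, hj]

lemma SW_neg (n : ℕ) : ∀ j, SW n (-j) = SW n j := by
  induction n with
  | zero => intro j; simp [SW_zero]
  | succ n ih =>
    intro j
    by_cases hj : j = 0
    · simp [hj]
    · rw [SW_succ n hj, SW_succ n (neg_ne_zero.mpr hj), ← ih (j - 1), ← ih (j + 1)]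
      rw [show -j - 1 = -(j+1) by ring, show -j + 1 = -(j - 1) by ring, add_comm]

lemma SW_parity (n : ℕ) : ∀ i j : ℤ, Odd (i + j) → (SW n j).coeff i = 0 := by
  induction n with
  | zero =>
    intro i j h
    rw [SW_zero]
    split_ifs with hj
    · rw [one_coeff, if_neg]
      rintro rfl
      simp [hj] at h
    · simp
  | succ n ih =>
    intro i j h
    have key : (xx * (SW n (j - 1) + SW n (j + 1))).coeff i = 0 := by
      rw [xx_mul_coeff]
      simp only [AddMonoidAlgebra.coeff_add, Finsupp.add_apply]
      rw [ih, ih, ih, ih]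
      · simp
      all_goals
        obtain ⟨k, hk⟩ := h
      · exact ⟨k + 1, by linarith⟩
      · exact ⟨k, by linarith⟩
      · exact ⟨k, by linarith⟩
      · exact ⟨k - 1, by linarith⟩
    rw [SW]
    split_ifs
    · rw [posL_coeff, key, ite_self]
    · exact key

abbrev PL := PowerSeries (LaurentPolynomial ℤ)

noncomputable def zz : PL := PowerSeries.X * PowerSeries.C xx

lemma coeff_zz_mul (n : ℕ) (f : PL) :
    PowerSeries.coeff (n+1) (zz * f) = xx * PowerSeries.coeff n f := by
  rw [zz, mul_assoc, PowerSeries.coeff_succ_X_mul, PowerSeries.coeff_C_mul]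

lemma coeff_zero_zz_mul (f : PL) : PowerSeries.coeff 0 (zz * f) = 0 := by
  simp [zz]

noncomputable def AA (j : ℤ) : PL := PowerSeries.mk (fun n => SW n j)

/-- `1 - B` -/
noncomputable def MM : PL := PowerSeries.mk (fun n => match n with
  | 0 => 1
  | n + 1 => - (xx * (SW n (-1) + SW n 1) - posL (xx * (SW n (-1) + SW n 1))))

lemma AA_zero : AA 0 = MM + zz * (AA (-1) + AA 1) := by
  ext1 n
  rw [map_add]
  cases n with
  | zero => rw [coeff_zero_zz_mul]; simp [AA, MM, SW_zero]
  | succ n =>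
    rw [coeff_zz_mul]
    simp only [AA, MM, PowerSeries.coeff_mk, map_add, SW_succ_zero]
    ring

lemma AA_ne {j : ℤ} (hj : j ≠ 0) : AA j = zz * (AA (j-1) + AA (j+1)) := by
  ext1 n
  cases n with
  | zero => rw [coeff_zero_zz_mul]; simp [AA, SW_zero, hj]
  | succ n =>
    rw [coeff_zz_mul]
    simp only [AA, PowerSeries.coeff_mk, map_add, SW_succ n hj]

lemma AA_neg_one : AA (-1) = AA 1 := by
  ext1 n
  simp [AA, SW_neg]

noncomputable def YY : PL := zz * catW (LaurentPolynomial ℤ) (xx ^ 2)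

lemma YY_eq : YY = zz * (1 + YY ^ 2) := by
  have h := catW_eq (LaurentPolynomial ℤ) (xx ^ 2)
  rw [map_pow] at h
  have hz : zz ^ 2 = PowerSeries.C xx ^ 2 * PowerSeries.X ^ 2 := by rw [zz]; ring
  rw [← hz] at h
  rw [YY]
  linear_combination zz * h

lemma zz_unique (D : ℕ → PL) (h0 : D 0 = 0) (hs : ∀ j, D (j+1) = zz * (D j + D (j+2))) :
    ∀ j, D j = 0 := by
  have key : ∀ n j, PowerSeries.coeff n (D j) = 0 := by
    intro n
    induction n with
    | zero =>
      intro j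
      cases j with
      | zero => rw [h0, map_zero]
      | succ j => rw [hs, coeff_zero_zz_mul]
    | succ n ih =>
      intro j
      cases j with
      | zero => rw [h0, map_zero]
      | succ j => rw [hs, coeff_zz_mul, map_add, ih, ih]; simp
  intro j
  ext1 n
  rw [key, map_zero]

lemma AA_one : AA 1 = YY * AA 0 := by
  have := zz_unique (fun j => AA (j : ℤ) - YY ^ j * AA 0) (by simp) (by
    intro j
    have h := AA_ne (j := ((j + 1 : ℕ) : ℤ)) (by positivity)
    rw [show ((j+1 : ℕ) : ℤ) - 1 = (j : ℤ) by push_cast; ring,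
      show ((j+1 : ℕ) : ℤ) + 1 = ((j + 2 : ℕ) : ℤ) by push_cast; ring] at h
    linear_combination h - YY ^ j * AA 0 * YY_eq) 1
  simp only [Nat.cast_one, pow_one] at this
  exact sub_eq_zero.mp this

lemma main_sq : AA 0 ^ 2 * (1 - 4 * zz ^ 2) = MM ^ 2 := by
  have h1 : AA 0 * (1 - 2 * zz * YY) = MM := by
    have := AA_zero
    rw [AA_neg_one, AA_one] at this
    linear_combination this
  rw [← h1]
  linear_combination (4 * zz * AA 0 ^ 2) * YY_eq

lemma trunc_coeff (f : LaurentPolynomial ℤ) (n : ℕ) :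
    (LaurentPolynomial.trunc f).coeff n = f.coeff (n : ℤ) := by
  rfl

lemma toLaurent_coeff_nat (p : Polynomial ℤ) (n : ℕ) :
    (Polynomial.toLaurent p).coeff (n : ℤ) = p.coeff n := by
  rw [← trunc_coeff, Polynomial.trunc_toLaurent]

lemma toLaurent_coeff_neg (p : Polynomial ℤ) {i : ℤ} (hi : i < 0) :
    (Polynomial.toLaurent p).coeff i = 0 := by
  rw [← Finsupp.notMem_support_iff, LaurentPolynomial.support_coeff_toLaurent]
  simp only [Finset.mem_map, not_exists, not_and]
  intro k _ hk
  have : (k : ℤ) = i := hk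
  omega

lemma toLaurent_trunc (f : LaurentPolynomial ℤ) (hf : ∀ i < 0, f.coeff i = 0) :
    Polynomial.toLaurent (LaurentPolynomial.trunc f) = f := by
  apply LaurentPolynomial.ext
  intro i
  rcases lt_or_ge i 0 with hi | hi
  · rw [toLaurent_coeff_neg _ hi, hf i hi]
  · lift i to ℕ using hi
    rw [toLaurent_coeff_nat, trunc_coeff]

abbrev PP := PowerSeries (Polynomial ℤ)

noncomputable def phi : PP →+* PL := PowerSeries.map Polynomial.toLaurent
noncomputable def invTL : Polynomial ℤ →+* LaurentPolynomial ℤ :=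
  (LaurentPolynomial.invert (R := ℤ)).toRingEquiv.toRingHom.comp Polynomial.toLaurent
noncomputable def psi : PP →+* PL := PowerSeries.map invTL

lemma invTL_apply (p : Polynomial ℤ) :
    invTL p = LaurentPolynomial.invert (Polynomial.toLaurent p) := rfl

lemma phi_inj : Function.Injective phi :=
  PowerSeries.map_injective _ Polynomial.toLaurent_injective

lemma psi_inj : Function.Injective psi :=
  PowerSeries.map_injective _ (by
    intro p q h
    rw [invTL_apply, invTL_apply] at h
    exact Polynomial.toLaurent_injective (LaurentPolynomial.invert.injective h))

noncomputable def FF (j : ℤ) : PP := PowerSeries.mk (fun n => LaurentPolynomial.trunc (SW n j))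
noncomputable def NN : PP := PowerSeries.mk (fun n =>
  LaurentPolynomial.trunc (LaurentPolynomial.invert (PowerSeries.coeff n MM)))

lemma SW_zero_coeff (n : ℕ) {i : ℤ} (hi : i ≤ 0) :
    (SW n 0).coeff i = if n = 0 ∧ i = 0 then 1 else 0 := by
  cases n with
  | zero => simp [SW_zero, one_coeff]
  | succ n => rw [SW_succ_zero, posL_coeff, if_neg (by omega)]; simp

lemma phi_FF : phi (FF 0) = AA 0 := by
  ext1 n
  rw [phi, PowerSeries.coeff_map, FF, PowerSeries.coeff_mk, AA, PowerSeries.coeff_mk,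
    toLaurent_trunc]
  intro i hi
  rw [SW_zero_coeff n hi.le, if_neg (by omega)]

lemma MM_coeff_pos (n : ℕ) {i : ℤ} (hi : 0 < i) : (PowerSeries.coeff n MM).coeff i = 0 := by
  cases n with
  | zero => simp [MM, one_coeff, hi.ne']
  | succ n =>
    simp only [MM, PowerSeries.coeff_mk]
    simp [posL_coeff, hi]

lemma psi_NN : psi NN = MM := by
  ext1 n
  rw [psi, PowerSeries.coeff_map, NN, PowerSeries.coeff_mk, invTL_apply, toLaurent_trunc]
  · exact LaurentPolynomial.involutive_invert _
  · intro i hi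
    rw [LaurentPolynomial.invert_apply]
    exact MM_coeff_pos n (by omega)

/-- the polynomial `X` as a constant series -/
noncomputable def Xc : PP := PowerSeries.C (Polynomial.X)

/-- `1 - a X²` -/
noncomputable def GG : PP := 1 - (catE (Polynomial ℤ) ^ 2 - 1) * Xc ^ 2

noncomputable def EE (K : Type*) [CommRing K] : PowerSeries K := 1 - 2 * PowerSeries.X * catO K

lemma phi_Xc : phi Xc = PowerSeries.C (LaurentPolynomial.T 1) := by
  simp [phi, Xc]
lemma psi_Xc : psi Xc = PowerSeries.C (LaurentPolynomial.T (-1)) := by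
  simp [psi, Xc, invTL_apply]

lemma map_EE {K K' : Type*} [CommRing K] [CommRing K'] (f : K →+* K') :
    PowerSeries.map f (EE K) = EE K' := by
  simp only [EE, map_sub, map_mul, map_one, map_ofNat, PowerSeries.map_X, map_catO]

lemma factor_zz : 1 - 4 * zz ^ 2 = EE (LaurentPolynomial ℤ) ^ 4 * (phi GG * psi GG) := by
  have hE : catE (LaurentPolynomial ℤ) * EE (LaurentPolynomial ℤ) = 1 := catE_eq _
  have hd : EE (LaurentPolynomial ℤ) ^ 2 = 1 - 4 * PowerSeries.X ^ 2 * catE _ ^ 2 := cat_d _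
  have h1 : phi GG = 1 - (catE (LaurentPolynomial ℤ) ^ 2 - 1) *
      (PowerSeries.C (LaurentPolynomial.T 1)) ^ 2 := by
    rw [GG]
    simp only [map_sub, map_mul, map_pow, map_one, phi_Xc]
    rw [phi, map_catE]
  have h2 : psi GG = 1 - (catE (LaurentPolynomial ℤ) ^ 2 - 1) *
      (PowerSeries.C (LaurentPolynomial.T (-1))) ^ 2 := by
    rw [GG]
    simp only [map_sub, map_mul, map_pow, map_one, psi_Xc]
    rw [psi, map_catE]
  have huv : (PowerSeries.C (LaurentPolynomial.T 1) : PL) *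
      (PowerSeries.C (LaurentPolynomial.T (-1)) : PL) = 1 := by
    rw [← map_mul, ← LaurentPolynomial.T_add]
    simp
  rw [h1, h2, zz, xx, map_add]
  generalize (PowerSeries.C (LaurentPolynomial.T 1) : PL) = u at *
  generalize (PowerSeries.C (LaurentPolynomial.T (-1)) : PL) = v at *
  generalize EE (LaurentPolynomial ℤ) = E at *
  generalize catE (LaurentPolynomial ℤ) = c at *
  generalize (PowerSeries.X : PL) = t at *
  have hc2 : c ^ 2 * E ^ 2 = 1 := by rw [← mul_pow, hE, one_pow]
  have h3 : E ^ 4 * (c ^ 2 - 1) = 4 * t ^ 2 := by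
    linear_combination (E ^ 2 + 4 * t ^ 2) * hc2 - E ^ 2 * hd
  have h4 : E ^ 4 * c ^ 4 = 1 := by
    linear_combination (c ^ 2 * E ^ 2 + 1) * hc2
  have huv2 : u ^ 2 * v ^ 2 = 1 := by rw [← mul_pow, huv, one_pow]
  linear_combination (2 + u ^ 2 + v ^ 2) * h3 - h4 - 8 * t ^ 2 * huv
    - E ^ 4 * (c ^ 2 - 1) ^ 2 * huv2

lemma exists_inv_GG : ∃ H : PP, GG * H = 1 := by
  have : IsUnit GG := by
    rw [PowerSeries.isUnit_iff_constantCoeff]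
    have : PowerSeries.constantCoeff (catE (Polynomial ℤ)) = 1 := by
      rw [← PowerSeries.coeff_zero_eq_constantCoeff_apply, catE, PowerSeries.coeff_mk]
      simp
    simp [GG, this]
  exact this.exists_right_inv

lemma cc_FF : PowerSeries.map (Polynomial.constantCoeff) (FF 0) = 1 := by
  ext n
  rw [PowerSeries.coeff_map, FF, PowerSeries.coeff_mk, Polynomial.constantCoeff_apply, trunc_coeff,
    Nat.cast_zero, SW_zero_coeff n le_rfl, PowerSeries.coeff_one]
  simp

lemma cc_GG : PowerSeries.map (Polynomial.constantCoeff) GG = 1 := by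
  simp [GG, Xc]

lemma wh_one : FF 0 ^ 2 * GG = 1 := by
  obtain ⟨H, hH⟩ := exists_inv_GG
  have hEi : catE (Polynomial ℤ) * EE (Polynomial ℤ) = 1 := catE_eq _
  have hm := main_sq
  rw [factor_zz, ← phi_FF, ← psi_NN] at hm
  have e1 : psi (EE _) = EE (LaurentPolynomial ℤ) := map_EE _
  have hEH : EE (Polynomial ℤ) ^ 4 * GG * (catE (Polynomial ℤ) ^ 4 * H) = 1 := by
    calc _ = (catE (Polynomial ℤ) * EE (Polynomial ℤ)) ^ 4 * (GG * H) := by ring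
      _ = 1 := by rw [hEi, hH]; ring
  have key : phi (FF 0 ^ 2 * GG) = psi (NN ^ 2 * (catE (Polynomial ℤ) ^ 4 * H)) := by
    have h2 := congrArg psi hEH
    rw [map_mul psi (EE (Polynomial ℤ) ^ 4 * GG), map_mul psi (EE (Polynomial ℤ) ^ 4), map_pow psi,
      e1, map_one] at h2
    rw [map_mul psi (NN ^ 2), map_pow psi, ← hm, map_mul phi, map_pow phi]
    linear_combination (-(phi (FF 0)) ^ 2 * phi GG) * h2
  apply phi_inj
  rw [map_one]
  ext1 n
  apply LaurentPolynomial.ext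
  intro i
  have hcc : PowerSeries.map (Polynomial.constantCoeff) (FF 0 ^ 2 * GG) = 1 := by
    rw [map_mul, map_pow, cc_FF, cc_GG]; ring
  rw [PowerSeries.coeff_one]
  rcases lt_trichotomy i 0 with hi | hi | hi
  · rw [phi, PowerSeries.coeff_map, toLaurent_coeff_neg _ hi]
    split_ifs
    · rw [one_coeff, if_neg hi.ne]
    · simp
  · subst hi
    have h3 := congrArg (PowerSeries.coeff n) hcc
    rw [PowerSeries.coeff_map, Polynomial.constantCoeff_apply, PowerSeries.coeff_one] at h3
    have h4 := toLaurent_coeff_nat (PowerSeries.coeff n (FF 0 ^ 2 * GG)) 0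
    rw [Nat.cast_zero] at h4
    rw [phi, PowerSeries.coeff_map, h4, h3]
    split_ifs
    · rw [one_coeff, if_pos rfl]
    · simp
  · rw [key, psi, PowerSeries.coeff_map, invTL_apply, LaurentPolynomial.invert_apply,
      toLaurent_coeff_neg _ (by omega)]
    split_ifs
    · rw [one_coeff, if_neg hi.ne']
    · simp

lemma wh_two : NN ^ 2 = EE (Polynomial ℤ) ^ 4 * GG := by
  apply psi_inj
  have hm := main_sq
  rw [factor_zz, ← phi_FF, ← psi_NN] at hm
  have h1 := congrArg phi wh_one
  rw [map_mul, map_pow, map_one] at h1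
  have e1 : psi (EE _) = EE (LaurentPolynomial ℤ) := map_EE _
  rw [map_pow, map_mul, map_pow, e1]
  linear_combination -hm + (EE (LaurentPolynomial ℤ) ^ 4 * psi GG) * h1

lemma eq_of_sq {f g : PowerSeries ℤ} (h : f ^ 2 = g ^ 2) (hf : PowerSeries.constantCoeff f = 1)
    (hg : PowerSeries.constantCoeff g = 1) : f = g := by
  rcases sq_eq_sq_iff_eq_or_eq_neg.mp h with h | h
  · exact h
  · have := congrArg PowerSeries.constantCoeff h
    rw [map_neg, hf, hg] at this
    norm_num at this

lemma EE_cc : PowerSeries.constantCoeff (EE ℤ) = 1 := by simp [EE]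

lemma part_two (n : ℕ) : (SW (2*n+1) 1).coeff (-1) + (SW (2*n+1) 1).coeff 1
    = 2 * 4 ^ n * (catalan n : ℤ) := by
  have h := congrArg (PowerSeries.map (Polynomial.constantCoeff)) wh_two
  rw [map_pow, map_mul, map_pow, map_EE, cc_GG, mul_one,
    show EE ℤ ^ 4 = (EE ℤ ^ 2) ^ 2 by ring] at h
  have hN : ∀ n, PowerSeries.coeff n (PowerSeries.map (Polynomial.constantCoeff) NN)
      = (PowerSeries.coeff n MM).coeff 0 := by
    intro n
    rw [PowerSeries.coeff_map, NN, PowerSeries.coeff_mk, Polynomial.constantCoeff_apply,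
      trunc_coeff, LaurentPolynomial.invert_apply]
    simp
  have h2 := eq_of_sq h (by
    rw [← PowerSeries.coeff_zero_eq_constantCoeff_apply, hN]
    simp [MM]) (by rw [map_pow, EE_cc, one_pow])
  have hd : EE ℤ ^ 2 = 1 - 4 * PowerSeries.X ^ 2 * catE ℤ ^ 2 := cat_d _
  rw [hd] at h2
  have h3 := congrArg (PowerSeries.coeff (2 * n + 1 + 1)) h2
  rw [hN] at h3
  have h4 : PowerSeries.coeff (2*n+1+1) (1 - 4 * PowerSeries.X ^ 2 * catE ℤ ^ 2)
      = - (4 * (4 ^ n * (catalan n : ℤ))) := by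
    rw [← catE_sq_coeff, map_sub, PowerSeries.coeff_one, if_neg (by omega),
      show (4 : PowerSeries ℤ) = PowerSeries.C 4 by simp, mul_assoc, PowerSeries.coeff_C_mul,
      show 2 * n + 1 + 1 = 2 * n + 2 by ring, PowerSeries.coeff_X_pow_mul]
    ring
  rw [h4] at h3
  simp only [MM, PowerSeries.coeff_mk] at h3
  rw [show SW (2*n+1) (-1) = SW (2*n+1) 1 from SW_neg _ _] at h3
  simp [posL_coeff, xx_mul_coeff] at h3
  linarith


lemma qc0 (p : Polynomial ℤ) : ((Polynomial.X ^ 2 + 1) * p).coeff 0 = p.coeff 0 := by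
  simp [Polynomial.mul_coeff_zero]
lemma qc1 (p : Polynomial ℤ) : ((Polynomial.X ^ 2 + 1) * p).coeff 1 = p.coeff 1 := by
  rw [add_mul, one_mul, Polynomial.coeff_add, Polynomial.coeff_X_pow_mul']; simp
lemma qc2 (p : Polynomial ℤ) (k : ℕ) :
    ((Polynomial.X ^ 2 + 1) * p).coeff (k + 2) = p.coeff k + p.coeff (k + 2) := by
  rw [add_mul, one_mul, Polynomial.coeff_add, Polynomial.coeff_X_pow_mul]

/-- counts for `(1,1)` -/
noncomputable def s11 : PowerSeries ℤ := PowerSeries.mk (fun n => (SW n 1).coeff 1)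
/-- counts for `(0,2)` -/
noncomputable def s20 : PowerSeries ℤ := PowerSeries.mk (fun n => (SW n 2).coeff 0)

noncomputable def lift0 : PowerSeries ℤ →+* PP := PowerSeries.map Polynomial.C

lemma Q_eq : (Xc ^ 2 + 1 : PP) = PowerSeries.C (Polynomial.X ^ 2 + 1) := by
  simp [Xc]

lemma eq_i : 2 * (PowerSeries.X * ((Xc ^ 2 + 1) * FF 1))
    = Xc * (FF 0 - 1 + 2 * (PowerSeries.X * lift0 s11)) := by
  rw [Q_eq, show (2 : PP) = PowerSeries.C (Polynomial.C 2) by rw [map_ofNat, map_ofNat], Xc]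
  ext1 n
  rw [PowerSeries.coeff_C_mul, PowerSeries.coeff_C_mul, map_add (PowerSeries.coeff n),
    map_sub (PowerSeries.coeff n), PowerSeries.coeff_C_mul]
  cases n with
  | zero => 
    simp only [PowerSeries.coeff_zero_X_mul, FF, PowerSeries.coeff_mk, SW_zero]
    have : LaurentPolynomial.trunc (1 : LaurentPolynomial ℤ) = 1 := by
      rw [← Polynomial.toLaurent_one, Polynomial.trunc_toLaurent]
    simp [this]
  | succ n =>
    rw [PowerSeries.coeff_succ_X_mul, PowerSeries.coeff_succ_X_mul, PowerSeries.coeff_C_mul,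
      PowerSeries.coeff_one, if_neg (by omega), sub_zero]
    simp only [FF, lift0, s11, PowerSeries.coeff_map, PowerSeries.coeff_mk]
    ext k
    rw [Polynomial.coeff_C_mul]
    match k with
    | 0 =>
      rw [qc0, Polynomial.coeff_X_mul_zero, trunc_coeff, SW_parity _ _ _ (by simp)]; simp
    | 1 =>
      rw [qc1, Polynomial.coeff_X_mul, trunc_coeff, Polynomial.coeff_add, trunc_coeff,
        SW_zero_coeff _ (by simp), ← Polynomial.C_mul, Polynomial.coeff_C]
      simp
    | k + 2 =>
      rw [qc2, Polynomial.coeff_X_mul, trunc_coeff, trunc_coeff, Polynomial.coeff_add, trunc_coeff,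
        ← Polynomial.C_mul, Polynomial.coeff_C, if_neg (by omega), SW_succ_zero, posL_coeff,
        if_pos (by positivity), xx_mul_coeff, show SW n (-1) = SW n 1 from SW_neg _ _]
      simp only [AddMonoidAlgebra.coeff_add, Finsupp.add_apply]
      rw [show ((k + 1 : ℕ) : ℤ) - 1 = (k : ℤ) by push_cast; ring,
        show ((k + 1 : ℕ) : ℤ) + 1 = ((k + 2 : ℕ) : ℤ) by push_cast; ring]
      ring

lemma eq_ii : PowerSeries.X * ((Xc ^ 2 + 1) * (FF 2 + FF 0))
    = Xc * FF 1 + PowerSeries.X * lift0 (s20 + 1) := by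
  rw [Q_eq, Xc]
  ext1 n
  rw [map_add (PowerSeries.coeff n), PowerSeries.coeff_C_mul]
  cases n with
  | zero => simp [FF, SW_zero]
  | succ n =>
    rw [PowerSeries.coeff_succ_X_mul, PowerSeries.coeff_succ_X_mul, PowerSeries.coeff_C_mul]
    simp only [FF, lift0, s20, PowerSeries.coeff_map, PowerSeries.coeff_mk, map_add]
    rw [← map_add]
    ext k
    match k with
    | 0 =>
      rw [qc0, Polynomial.coeff_add, Polynomial.coeff_X_mul_zero, ← Polynomial.C_add, trunc_coeff,
        Polynomial.coeff_C, if_pos rfl]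
      simp only [AddMonoidAlgebra.coeff_add, Finsupp.add_apply]
      rw [Nat.cast_zero, SW_zero_coeff _ le_rfl, PowerSeries.coeff_one]
      simp
    | 1 =>
      rw [qc1, Polynomial.coeff_add, Polynomial.coeff_X_mul, ← Polynomial.C_add, trunc_coeff,
        Polynomial.coeff_C, if_neg (by omega), trunc_coeff]
      simp only [AddMonoidAlgebra.coeff_add, Finsupp.add_apply]
      rw [SW_parity _ _ _ (by decide), SW_parity _ _ _ (by decide), SW_parity _ _ _ (by decide)]
    | k + 2 =>
      rw [qc2, Polynomial.coeff_add, Polynomial.coeff_X_mul, ← Polynomial.C_add, trunc_coeff,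
        trunc_coeff, Polynomial.coeff_C, if_neg (by omega), trunc_coeff,
        SW_succ _ one_ne_zero, xx_mul_coeff]
      simp only [AddMonoidAlgebra.coeff_add, Finsupp.add_apply]
      rw [show ((k + 1 : ℕ) : ℤ) - 1 = (k : ℤ) by push_cast; ring,
        show ((k + 1 : ℕ) : ℤ) + 1 = ((k + 2 : ℕ) : ℤ) by push_cast; ring]
      norm_num
      ring

/-- evaluation at `x = i` -/
noncomputable def eta : PP →+* PowerSeries ℂ :=
  PowerSeries.map (Polynomial.eval₂RingHom (Int.castRingHom ℂ) Complex.I)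

noncomputable def toC : PowerSeries ℤ →+* PowerSeries ℂ := PowerSeries.map (Int.castRingHom ℂ)

lemma toC_inj : Function.Injective toC :=
  PowerSeries.map_injective _ Int.cast_injective

lemma eta_lift0 (f : PowerSeries ℤ) : eta (lift0 f) = toC f := by
  ext n
  simp [eta, lift0, toC]

lemma eta_Xc : eta Xc ^ 2 + 1 = 0 := by
  rw [eta, Xc, PowerSeries.map_C, ← map_pow]
  simp

lemma eta_X : eta PowerSeries.X = PowerSeries.X := by simp [eta]

lemma eta_Xc_ne : eta Xc ≠ 0 := by
  intro h
  have := eta_Xc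
  rw [h] at this
  simp at this

lemma eta_catE : eta (catE _) = catE ℂ := map_catE _ _
lemma toC_catE : toC (catE _) = catE ℂ := map_catE _ _
lemma toC_EE : toC (EE _) = EE ℂ := map_EE _
lemma toC_X : toC PowerSeries.X = PowerSeries.X := by simp [toC]

lemma eta_GG : eta GG = catE ℂ ^ 2 := by
  rw [GG]
  simp only [map_sub, map_mul, map_pow, map_one, eta_catE]
  linear_combination -(catE ℂ ^ 2 - 1) * eta_Xc

noncomputable def ee : PowerSeries ℤ := 1 - 2 * (PowerSeries.X * s11)

lemma eta_F : eta (FF 0) = toC ee := by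
  have h := congrArg eta eq_i
  simp only [map_add, map_sub, map_mul, map_pow, map_one, map_ofNat, eta_lift0, eta_X] at h
  rw [eta_Xc] at h
  simp only [zero_mul, mul_zero] at h
  rcases mul_eq_zero.mp h.symm with h | h
  · exact absurd h eta_Xc_ne
  · simp only [ee, map_sub, map_mul, map_one, map_ofNat, toC_X]
    linear_combination h

lemma ee_sq : ee ^ 2 * catE ℤ ^ 2 = 1 := by
  apply toC_inj
  have h := congrArg eta wh_one
  rw [map_mul, map_pow, map_one, eta_F, eta_GG] at h
  rw [map_mul, map_pow, map_pow, map_one, toC_catE, h]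

lemma ee_eq : ee = EE ℤ := by
  have hE : catE ℤ * EE ℤ = 1 := catE_eq _
  apply eq_of_sq _ (by simp [ee]) EE_cc
  have h2 : EE ℤ ^ 2 * catE ℤ ^ 2 = 1 := by rw [← mul_pow, mul_comm, hE, one_pow]
  linear_combination EE ℤ ^ 2 * ee_sq - ee ^ 2 * h2

lemma X_ne {K : Type*} [CommRing K] [Nontrivial K] : (PowerSeries.X : PowerSeries K) ≠ 0 :=
  PowerSeries.X_ne_zero

lemma two_ne : (2 : PowerSeries ℤ) ≠ 0 := by
  intro h
  have := congrArg PowerSeries.constantCoeff h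
  rw [map_ofNat, map_zero] at this
  norm_num at this

lemma four_ne : (4 : PowerSeries ℂ) ≠ 0 := by
  intro h
  have := congrArg PowerSeries.constantCoeff h
  rw [map_ofNat, map_zero] at this
  norm_num at this

lemma s11_eq : s11 = catO ℤ := by
  have h := ee_eq
  rw [ee, EE] at h
  have h2 : (2 * PowerSeries.X) * s11 = (2 * PowerSeries.X) * catO ℤ := by
    linear_combination -h
  exact mul_left_cancel₀ (mul_ne_zero two_ne X_ne) h2

lemma s20_eq : toC (s20 + 1) = catE ℂ := by
  have hE : catE ℂ * EE ℂ = 1 := catE_eq _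
  have hd : EE ℂ ^ 2 = 1 - 4 * PowerSeries.X ^ 2 * catE ℂ ^ 2 := cat_d _
  have h2 := congrArg eta eq_ii
  simp only [map_add eta, map_mul eta, map_pow eta, map_one eta, eta_lift0, eta_X] at h2
  rw [eta_Xc] at h2
  have hq : (Xc ^ 2 + 1 : PP) ≠ 0 := by
    rw [Q_eq]
    intro h
    have h := congrArg (fun f => (PowerSeries.constantCoeff f).coeff 0) h
    simp at h
  have hi : Xc * FF 0 = Xc * lift0 ee + (Xc ^ 2 + 1) * (2 * PowerSeries.X * FF 1) := by
    have := eq_i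
    rw [ee]
    simp only [map_sub, map_mul, map_one, map_ofNat]
    rw [show lift0 PowerSeries.X = PowerSeries.X by simp [lift0]]
    linear_combination -this
  have he : lift0 ee ^ 2 * catE (Polynomial ℤ) ^ 2 = 1 := by
    have := congrArg lift0 ee_sq
    rw [map_mul, map_pow, map_pow, map_one] at this
    rwa [show lift0 (catE ℤ) = catE (Polynomial ℤ) from map_catE _ _] at this
  have h1 : (Xc ^ 2 + 1) * (-(lift0 ee ^ 2 * (catE (Polynomial ℤ) ^ 2 - 1) * Xc ^ 2)
      + (2 * Xc * lift0 ee * (2 * PowerSeries.X * FF 1)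
        + (Xc ^ 2 + 1) * (2 * PowerSeries.X * FF 1) ^ 2) * GG) = 0 := by
    have hw := wh_one
    have h3 : (Xc * lift0 ee + (Xc ^ 2 + 1) * (2 * PowerSeries.X * FF 1)) ^ 2 * GG = Xc ^ 2 := by
      rw [← hi]; linear_combination Xc ^ 2 * hw
    have hG : GG = 1 - (catE (Polynomial ℤ) ^ 2 - 1) * Xc ^ 2 := rfl
    linear_combination h3 - Xc ^ 2 * he - Xc ^ 2 * lift0 ee ^ 2 * hG
  have h4 := (mul_eq_zero.mp h1).resolve_left hq
  have h5 := congrArg eta h4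
  simp only [map_add eta, map_neg eta, map_sub eta, map_mul eta, map_pow eta, map_one eta,
    map_ofNat eta, map_zero eta, eta_lift0, eta_X, eta_GG, eta_catE] at h5
  rw [eta_Xc, ee_eq, toC_EE] at h5
  have h6 := eta_Xc
  generalize eta Xc = x at *
  generalize eta (FF 1) = p at *
  rw [map_add toC, map_one toC] at *
  generalize toC s20 + 1 = s at *
  generalize EE ℂ = E at *
  generalize catE ℂ = c at *
  have h7 : (4 * (PowerSeries.X : PowerSeries ℂ) ^ 2) * s = (4 * PowerSeries.X ^ 2) * c := by
    have h8 : x * p = - (PowerSeries.X * s) := by linear_combination -h2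
    have h9 : E ^ 2 * (c ^ 2 - 1) = 4 * PowerSeries.X ^ 2 * E * c ^ 2 * s := by
      linear_combination h5 + E ^ 2 * (c ^ 2 - 1) * h6 - 4 * PowerSeries.X * E * c ^ 2 * h8
    linear_combination (-E) * h9 - E * hd
      + (-4 * PowerSeries.X ^ 2 * s * (E * c + 1) + E * (c * E + 1) + 4 * PowerSeries.X ^ 2 * c) * hE
  exact mul_left_cancel₀ (mul_ne_zero four_ne (pow_ne_zero 2 X_ne)) h7


/-- for walks with diagonal steps,
`a_{1,1}(2n+1) = C_{2n+1}`, `a_{-1,1}(2n+1) = 2·4ⁿ·Cₙ − C_{2n+1}`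
(stated additively to stay in ℕ), and `a_{0,2}(2n) = C_{2n}` for `n ≥ 1`. -/
theorem diag_slit_count_endpoints :
    (∀ n : ℕ, slitCount diagSteps 1 1 (2 * n + 1) = catalan (2 * n + 1))
    ∧ (∀ n : ℕ,
        slitCount diagSteps (-1) 1 (2 * n + 1) + catalan (2 * n + 1) = 2 * 4 ^ n * catalan n)
    ∧ (∀ n : ℕ, 1 ≤ n → slitCount diagSteps 0 2 (2 * n) = catalan (2 * n)) := by
  refine ⟨fun n => ?_, fun n => ?_, fun n hn => ?_⟩
  · have h := congrArg (PowerSeries.coeff (2 * n + 1)) s11_eq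
    rw [s11, catO, PowerSeries.coeff_mk, PowerSeries.coeff_mk, ← slitCount_eq,
      if_neg (by simp)] at h
    exact_mod_cast h
  · have h := congrArg (PowerSeries.coeff (2 * n + 1)) s11_eq
    rw [s11, catO, PowerSeries.coeff_mk, PowerSeries.coeff_mk, if_neg (by simp)] at h
    have h2 := part_two n
    rw [h, ← slitCount_eq] at h2
    exact_mod_cast h2
  · have h := congrArg (PowerSeries.coeff (2 * n)) s20_eq
    rw [toC, PowerSeries.coeff_map, map_add, PowerSeries.coeff_one, if_neg (by omega), add_zero,
      s20, catE, PowerSeries.coeff_mk, PowerSeries.coeff_mk, ← slitCount_eq,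
      if_pos (by simp)] at h
    simp only [eq_intCast, Int.cast_natCast] at h
    exact_mod_cast h
end

section
/- For walks on the slit plane with diagonal steps: for all i ≥ 1 and n ≥ i, the number of such walks of length 2n ending at (2i,0) equals (i/n) · binom(2i,i) · binom(2n, n−i) · 4^{n−i}. -/
open Filter

namespace SlitProof

open PowerSeries LaurentPolynomial

abbrev L := LaurentPolynomial ℚ

/-! ### Central binomial series -/

noncomputable def cSer : ℚ⟦X⟧ := PowerSeries.mk fun k => (Nat.centralBinom k : ℚ) / 4 ^ k

lemma cSer_ode : (2 : ℚ⟦X⟧) * (1 - X) * d⁄dX ℚ cSer = cSer := by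
  have h2 : (2 : ℚ⟦X⟧) = PowerSeries.C (2:ℚ) := (map_ofNat _ 2).symm
  have key : ∀ k : ℕ, 2 * ((k:ℚ) + 1) * ((Nat.centralBinom (k+1) : ℚ) / 4 ^ (k+1))
      = (2 * k + 1) * ((Nat.centralBinom k : ℚ) / 4 ^ k) := by
    intro k
    have h := Nat.succ_mul_centralBinom_succ k
    have h' : ((k:ℚ) + 1) * Nat.centralBinom (k+1) = 2 * (2 * k + 1) * Nat.centralBinom k := by
      exact_mod_cast h
    rw [pow_succ]
    field_simp
    linear_combination 2 * h'
  ext n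
  rw [h2, mul_assoc, PowerSeries.coeff_C_mul, sub_mul, one_mul, map_sub]
  cases n with
  | zero =>
    simp [PowerSeries.coeff_derivative, cSer, Nat.centralBinom, Nat.choose]
    norm_num
  | succ n =>
    rw [PowerSeries.coeff_succ_X_mul]
    simp only [PowerSeries.coeff_derivative, cSer, PowerSeries.coeff_mk]
    have := key (n+1)
    push_cast at this ⊢
    linear_combination this

lemma cSer_sq : cSer ^ 2 * (1 - X) = 1 := by
  apply PowerSeries.derivative.ext
  · have h := cSer_ode
    simp only [Derivation.leibniz, smul_eq_mul, map_sub, PowerSeries.derivative_one,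
      PowerSeries.derivative_X, PowerSeries.derivative_pow]
    push_cast
    simp only [zero_sub]
    linear_combination cSer * h
  · simp [cSer]

lemma cSer_subst_sq (b : L⟦X⟧) (hb : PowerSeries.constantCoeff b = 0) :
    (cSer.subst b) ^ 2 * (1 - b) = 1 := by
  have hs : HasSubst b := HasSubst.of_constantCoeff_zero' hb
  have h := congrArg (substAlgHom (R := ℚ) hs) cSer_sq
  simpa [map_mul, map_pow, map_sub, map_one, substAlgHom_X, coe_substAlgHom] using h

/-! ### The series beta -/

noncomputable def catB : L⟦X⟧ :=
  ((catalanSeries.map (Nat.castRingHom ℚ)).subst ((4 : L⟦X⟧) * X ^ 2))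

lemma hs4 : HasSubst ((4 : L⟦X⟧) * X ^ 2) := HasSubst.of_constantCoeff_zero' (by simp)

lemma catB_eq : catB ^ 2 * (4 * X ^ 2) + 1 = catB := by
  have h := congrArg (fun f => substAlgHom (R := ℚ) hs4 (PowerSeries.map (Nat.castRingHom ℚ) f))
    catalanSeries_sq_mul_X_add_one
  simpa only [map_mul, map_pow, map_add, map_one, substAlgHom_X, coe_substAlgHom,
    PowerSeries.map_X, catB] using h

noncomputable def beta : L⟦X⟧ := catB - 1

lemma beta_eq : beta = 4 * X ^ 2 * (1 + beta) ^ 2 := by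
  have := catB_eq
  unfold beta
  linear_combination -this

lemma beta_const : PowerSeries.constantCoeff beta = 0 := by
  rw [beta_eq]; simp

/-- `[z^n] (z C(z)^2)^i`. -/
def eCoef (i : ℕ) : ℕ → ℚ
  | 0 => if i = 0 then 1 else 0
  | n + 1 => (Nat.choose (2 * n + 1) (n + i) : ℚ) - Nat.choose (2 * n + 1) (n + 1 + i)

lemma eCoef_zero_succ (n : ℕ) : eCoef 0 (n + 1) = 0 := by
  simp only [eCoef, add_zero]
  rw [← Nat.choose_symm_half]; simp

lemma eCoef_rec (i n : ℕ) :
    eCoef (i+1) (n+1) = eCoef i n + 2 * eCoef (i+1) n + eCoef (i+2) n := by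
  cases n with
  | zero =>
    rcases i with _ | i
    · simp [eCoef]
    · simp [eCoef, Nat.choose]
  | succ n =>
    have p2 : ∀ k, Nat.choose (2 * (n+1) + 1) (k+2)
        = Nat.choose (2*n+1) k + 2 * Nat.choose (2*n+1) (k+1) + Nat.choose (2*n+1) (k+2) := by
      intro k
      rw [show 2 * (n+1) + 1 = 2*n+1+1+1 by ring, Nat.choose_succ_succ' _ (k+1),
        Nat.choose_succ_succ' _ k, Nat.choose_succ_succ' _ (k+1)]
      ring
    simp only [eCoef]
    rw [show n + 1 + (i + 1) = (n + i) + 2 by ring, show n + 1 + 1 + (i+1) = (n+i+1)+2 by ring,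
      p2, p2]
    rw [show n + (i+1) = n+i+1 by ring, show n + (i+2) = n + i + 2 by ring,
      show n + 1 + i = n + i + 1 by ring, show n + 1 + (i+2) = n + i + 1 + 2 by ring,
      show n + i + 1 + 1 = n + i + 2 by ring]
    push_cast
    ring

lemma eCoef_formula (i n : ℕ) : (n : ℚ) * eCoef i n = i * Nat.choose (2 * n) (n + i) := by
  cases n with
  | zero => rcases i with _ | i <;> simp [eCoef]
  | succ n =>
    simp only [eCoef]
    have h1 : (Nat.choose (2*n+1+1) (n+i+1) : ℚ) * (n+i+1) = (2*n+2) * Nat.choose (2*n+1) (n+i) := by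
      have := Nat.add_one_mul_choose_eq (2*n+1) (n+i)
      have h : ((2*n+1+1 : ℕ):ℚ) * Nat.choose (2*n+1) (n+i)
        = Nat.choose (2*n+1+1) (n+i+1) * (n+i+1 : ℕ) := by exact_mod_cast this
      push_cast at h
      linear_combination -h
    have h2 : (Nat.choose (2*n+1+1) (n+i+1) : ℚ)
        = Nat.choose (2*n+1) (n+i) + Nat.choose (2*n+1) (n+i+1) := by
      exact_mod_cast Nat.choose_succ_succ' (2*n+1) (n+i)
    rw [show 2 * (n+1) = 2*n+1+1 by ring, show n + 1 + i = n + i + 1 by ring]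
    push_cast
    linear_combination -h1 + (n+1) * h2

lemma coeff_X2 (f : L⟦X⟧) (n : ℕ) : PowerSeries.coeff (n+2) (X^2 * f) = PowerSeries.coeff n f := by
  simp [PowerSeries.coeff_X_pow_mul]

lemma beta_pow_rec (i : ℕ) : beta ^ (i+1) = X ^ 2 * (PowerSeries.C (4 : L) *
    (beta ^ i + 2 * beta ^ (i+1) + beta ^ (i+2))) := by
  have h := beta_eq
  have h4 : (PowerSeries.C (4 : L)) = (4 : L⟦X⟧) := map_ofNat _ 4
  rw [h4]
  linear_combination beta ^ i * h

lemma beta_coeff_even (n i : ℕ) :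
    PowerSeries.coeff (2 * n) (beta ^ i) = LaurentPolynomial.C ((4:ℚ) ^ n * eCoef i n) := by
  induction n generalizing i with
  | zero =>
    rcases i with _ | i
    · simp [eCoef]
    · simp [eCoef, beta_const]
  | succ n ih =>
    rcases i with _ | i
    · rw [eCoef_zero_succ]; simp [PowerSeries.coeff_one]
    · have h2 : (2 : L⟦X⟧) = PowerSeries.C (2 : L) := (map_ofNat _ 2).symm
      rw [beta_pow_rec, show 2 * (n+1) = 2*n+2 by ring, coeff_X2, PowerSeries.coeff_C_mul,
        map_add, map_add, h2, PowerSeries.coeff_C_mul, ih, ih, ih, eCoef_rec]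
      have e4 : (4 : L) = LaurentPolynomial.C 4 := (map_ofNat _ 4).symm
      have e2 : (2 : L) = LaurentPolynomial.C 2 := (map_ofNat _ 2).symm
      rw [e4, e2]
      simp only [← map_mul, ← map_add]
      congr 1
      ring

lemma beta_coeff_C (n i : ℕ) :
    ∃ q : ℚ, PowerSeries.coeff n (beta ^ i) = LaurentPolynomial.C q := by
  induction n using Nat.strong_induction_on generalizing i with
  | _ n ih =>
  rcases i with _ | i
  · refine ⟨if n = 0 then 1 else 0, ?_⟩
    by_cases h : n = 0 <;> simp [PowerSeries.coeff_one, h]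
  · rcases n with _ | _ | n
    · exact ⟨0, by simp [beta_const]⟩
    · refine ⟨0, ?_⟩
      rw [beta_pow_rec, PowerSeries.coeff_X_pow_mul']; simp
    · obtain ⟨a, ha⟩ := ih n (by omega) i
      obtain ⟨b, hb⟩ := ih n (by omega) (i+1)
      obtain ⟨c, hc⟩ := ih n (by omega) (i+2)
      refine ⟨4 * (a + 2 * b + c), ?_⟩
      have h2 : (2 : L⟦X⟧) = PowerSeries.C (2 : L) := (map_ofNat _ 2).symm
      rw [beta_pow_rec, coeff_X2, PowerSeries.coeff_C_mul,
        map_add, map_add, h2, PowerSeries.coeff_C_mul, ha, hb, hc]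
      have e4 : (4 : L) = LaurentPolynomial.C 4 := (map_ofNat _ 4).symm
      have e2 : (2 : L) = LaurentPolynomial.C 2 := (map_ofNat _ 2).symm
      rw [e4, e2]
      simp only [← map_mul, ← map_add]

lemma beta_coeff_lt (n i : ℕ) (h : n < i) : PowerSeries.coeff n (beta ^ i) = 0 := by
  apply PowerSeries.coeff_of_lt_order
  have h1 : (1 : ℕ∞) ≤ beta.order := by
    rw [PowerSeries.one_le_order_iff_constCoeff_eq_zero]; exact beta_const
  have h2 := PowerSeries.le_order_pow beta i
  refine lt_of_lt_of_le ?_ h2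
  refine lt_of_lt_of_le (b := (i : ℕ∞)) (by exact_mod_cast h) ?_
  calc (i : ℕ∞) = i • (1:ℕ∞) := by simp
    _ ≤ _ := nsmul_le_nsmul_right h1 i

/-! ### Factorization -/

noncomputable def gSer (e : ℤ) : L⟦X⟧ := cSer.subst (PowerSeries.C (T e : L) * beta)

lemma gconst (e : ℤ) : PowerSeries.constantCoeff (PowerSeries.C (T e : L) * beta) = 0 := by
  simp [beta_const]

noncomputable def wx : L := T 1 + T (-1)

noncomputable def fSer : L⟦X⟧ := cSer.subst (PowerSeries.C (4 * wx ^ 2 : L) * X ^ 2)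

lemma fconst : PowerSeries.constantCoeff (PowerSeries.C (4 * wx ^ 2 : L) * X ^ 2) = 0 := by
  simp

lemma subst_constantCoeff (b : L⟦X⟧) (hb : PowerSeries.constantCoeff b = 0) :
    PowerSeries.constantCoeff (cSer.subst b) = 1 := by
  have hs : HasSubst b := HasSubst.of_constantCoeff_zero' hb
  rw [← PowerSeries.coeff_zero_eq_constantCoeff_apply, coeff_subst' hs, finsum_eq_single _ 0]
  · simp [cSer]
  · intro n hn
    simp [hb, hn]

lemma fSer_factor : fSer = gSer 2 * ((1 + beta) * gSer (-2)) := by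
  have hF := cSer_subst_sq _ fconst
  have h1 := cSer_subst_sq _ (gconst 2)
  have h2 := cSer_subst_sq _ (gconst (-2))
  have hb := beta_eq
  have hF0 := subst_constantCoeff _ fconst
  have h10 := subst_constantCoeff _ (gconst 2)
  have h20 := subst_constantCoeff _ (gconst (-2))
  change fSer ^ 2 * _ = _ at hF
  change gSer 2 ^ 2 * _ = _ at h1
  change gSer (-2) ^ 2 * _ = _ at h2
  change PowerSeries.constantCoeff fSer = _ at hF0
  change PowerSeries.constantCoeff (gSer 2) = _ at h10
  change PowerSeries.constantCoeff (gSer (-2)) = _ at h20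
  have hw : (4 * wx ^ 2 : L) = 4 * (T 2 + 2 + T (-2)) := by
    have a : (T 2 : L) = T 1 * T 1 := by rw [← T_add]; norm_num
    have b : (T (-2) : L) = T (-1) * T (-1) := by rw [← T_add]; norm_num
    have c : (T 1 * T (-1) : L) = 1 := by rw [← T_add]; simp
    rw [a, b, wx]
    linear_combination 8 * c
  have hT : PowerSeries.C (T 2 : L) * PowerSeries.C (T (-2) : L) = 1 := by
    rw [← map_mul, ← T_add]; simp
  rw [hw] at hF
  simp only [map_mul, map_add] at hF
  rw [map_ofNat, map_ofNat] at hF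
  set p := PowerSeries.C (T 2 : L)
  set q := PowerSeries.C (T (-2) : L)
  set G := gSer 2 * ((1 + beta) * gSer (-2)) with hG
  have hD : (1 + beta) ^ 2 * (1 - 4 * (p + 2 + q) * X ^ 2) = (1 - p * beta) * (1 - q * beta) := by
    linear_combination (p + 2 + q) * hb - beta ^ 2 * hT
  have hG2 : G ^ 2 * (1 - 4 * (p + 2 + q) * X ^ 2) = 1 := by
    calc G ^ 2 * (1 - 4 * (p + 2 + q) * X ^ 2)
        = gSer 2 ^ 2 * gSer (-2) ^ 2 * ((1 + beta) ^ 2 * (1 - 4 * (p + 2 + q) * X ^ 2)) := by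
          rw [hG]; ring
      _ = (gSer 2 ^ 2 * (1 - p * beta)) * (gSer (-2) ^ 2 * (1 - q * beta)) := by rw [hD]; ring
      _ = 1 := by rw [h1, h2, one_mul]
  have hsq : fSer ^ 2 = G ^ 2 := by
    calc fSer ^ 2 = fSer ^ 2 * (G ^ 2 * (1 - 4 * (p + 2 + q) * X ^ 2)) := by rw [hG2, mul_one]
      _ = (fSer ^ 2 * (1 - 4 * (p + 2 + q) * X ^ 2)) * G ^ 2 := by ring
      _ = G ^ 2 := by rw [hF, one_mul]
  have hG0 : PowerSeries.constantCoeff G = 1 := by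
    rw [hG]; simp [h10, h20, beta_const]
  rcases sq_eq_sq_iff_eq_or_eq_neg.mp hsq with h | h
  · exact h
  · exfalso
    have := congrArg PowerSeries.constantCoeff h
    rw [map_neg, hF0, hG0] at this
    have h3 : (2 : L) = 0 := by linear_combination this
    have h4 := congrArg (fun f : L => f.coeff 0) h3
    have e2 : (2 : L) = LaurentPolynomial.C 2 := (map_ofNat _ 2).symm
    rw [e2] at h4
    simp at h4

/-- coefficient of gSer -/
lemma gSer_coeff (e : ℤ) (n : ℕ) : PowerSeries.coeff n (gSer e) =
    ∑ k ∈ Finset.range (n+1), ((Nat.centralBinom k : ℚ) / 4 ^ k) •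
      (T (k * e) * PowerSeries.coeff n (beta ^ k)) := by
  have hs : HasSubst (PowerSeries.C (T e : L) * beta) :=
    HasSubst.of_constantCoeff_zero' (gconst e)
  have hco : ∀ k : ℕ, PowerSeries.coeff n ((PowerSeries.C (T e : L) * beta) ^ k)
      = T (k * e) * PowerSeries.coeff n (beta ^ k) := by
    intro k
    rw [mul_pow, ← map_pow, PowerSeries.coeff_C_mul, T_pow]
  rw [gSer, coeff_subst' hs, finsum_eq_sum_of_support_subset (s := Finset.range (n+1))]
  · refine Finset.sum_congr rfl fun k _ => ?_
    rw [hco]; simp [cSer]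
  · intro k hk
    by_contra hk'
    apply hk
    simp only [Finset.coe_range, Set.mem_Iio, not_lt] at hk'
    simp only [hco]
    rw [beta_coeff_lt n k (by omega)]; simp

lemma gSer_coeff_coeff (e : ℤ) (n : ℕ) (a : ℤ) (ha : ∀ k : ℕ, k ≤ n → k * e = a → k = 0 ∧ n ≠ 0) :
    (PowerSeries.coeff n (gSer e)).coeff a = 0 := by
  rw [gSer_coeff]
  simp only [AddMonoidAlgebra.coeff_sum, AddMonoidAlgebra.coeff_smul, Finsupp.coe_finsetSum,
    Finset.sum_apply, Finsupp.smul_apply]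
  refine Finset.sum_eq_zero fun k hk => ?_
  by_cases hk0 : k = 0 ∧ n ≠ 0
  · obtain ⟨rfl, h0⟩ := hk0
    simp [PowerSeries.coeff_one, h0]
  obtain ⟨q, hq⟩ := beta_coeff_C n k
  rw [hq, mul_comm, ← single_eq_C_mul_T, AddMonoidAlgebra.coeff_single, Finsupp.single_apply,
    if_neg (fun h => hk0 (ha k (by simpa [Nat.lt_succ_iff] using hk) h)), smul_zero]

lemma gSer_main (n i : ℕ) (hi : i ≤ n) :
    (PowerSeries.coeff (2 * n) (gSer 2)).coeff (2 * i)
      = (Nat.centralBinom i : ℚ) / 4 ^ i * (4 ^ n * eCoef i n) := by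
  rw [gSer_coeff]
  simp only [AddMonoidAlgebra.coeff_sum, AddMonoidAlgebra.coeff_smul, Finsupp.coe_finsetSum,
    Finset.sum_apply, Finsupp.smul_apply]
  rw [Finset.sum_eq_single i]
  · rw [beta_coeff_even, mul_comm (T _), ← single_eq_C_mul_T, AddMonoidAlgebra.coeff_single,
      Finsupp.single_apply, if_pos (by ring), smul_eq_mul]
  · intro k _ hk
    rw [beta_coeff_even, mul_comm (T _), ← single_eq_C_mul_T, AddMonoidAlgebra.coeff_single,
      Finsupp.single_apply, if_neg (by omega), smul_zero]
  · intro h; exfalso; apply h; simp; omega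

lemma fSer_coeff_even (n : ℕ) : PowerSeries.coeff (2 * n) fSer
    = wx ^ (2*n) * (Nat.choose (2*n) n : L) := by
  have hs := HasSubst.of_constantCoeff_zero' fconst
  rw [fSer, coeff_subst' hs, finsum_eq_single _ n]
  · rw [mul_pow, ← map_pow, PowerSeries.coeff_C_mul, ← pow_mul, PowerSeries.coeff_X_pow, if_pos rfl,
      mul_one, mul_pow, ← pow_mul, cSer, PowerSeries.coeff_mk, LaurentPolynomial.smul_eq_C_mul]
    have e4 : (4 : L) = LaurentPolynomial.C 4 := (map_ofNat _ 4).symm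
    have ec : (Nat.choose (2*n) n : L) = LaurentPolynomial.C (Nat.choose (2*n) n : ℚ) :=
      (map_natCast _ _).symm
    rw [e4, ec, ← map_pow, ← mul_assoc, ← map_mul, mul_comm, Nat.centralBinom]
    congr 2
    field_simp
  · intro k hk
    rw [mul_pow, ← map_pow, PowerSeries.coeff_C_mul, ← pow_mul, PowerSeries.coeff_X_pow,
      if_neg (by omega)]
    simp

lemma fSer_coeff_odd (n : ℕ) : PowerSeries.coeff (2 * n + 1) fSer = 0 := by
  have hs := HasSubst.of_constantCoeff_zero' fconst
  rw [fSer, coeff_subst' hs]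
  apply finsum_eq_zero_of_forall_eq_zero
  intro k
  rw [mul_pow, ← map_pow, PowerSeries.coeff_C_mul, ← pow_mul, PowerSeries.coeff_X_pow,
      if_neg (by omega)]
  simp

/-! ### Laurent-valued walk counts -/

noncomputable def posPart (f : L) : L := .ofCoeff (f.coeff.filter (fun a => 0 < a))

lemma posPart_coeff (f : L) (a : ℤ) : (posPart f).coeff a = if 0 < a then f.coeff a else 0 := by
  simp [posPart, Finsupp.filter_apply]

noncomputable def sL : ℕ → ℤ → L
  | 0, b => if b = 0 then 1 else 0
  | n + 1, b => if b = 0 then posPart (wx * (sL n (b-1) + sL n (b+1)))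
      else wx * (sL n (b-1) + sL n (b+1))

noncomputable def vL : ℕ → L
  | 0 => 1
  | n + 1 => posPart (wx * (sL n (-1) + sL n 1)) - wx * (sL n (-1) + sL n 1)

def cB : ℕ → ℤ → ℕ
  | 0, b => if b = 0 then 1 else 0
  | n + 1, b => cB n (b-1) + cB n (b+1)

lemma cB_low (n : ℕ) (b : ℤ) (h : b < -n) : cB n b = 0 := by
  induction n generalizing b with
  | zero => simp at h; simp [cB]; omega
  | succ n ih =>
    push_cast at h
    rw [cB, ih _ (by omega)]
    by_cases hb : b + 1 < -n
    · rw [ih _ hb]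
    · omega

lemma cB_odd (n : ℕ) (b : ℤ) (h : (n + b) % 2 = 1) : cB n b = 0 := by
  induction n generalizing b with
  | zero => simp [cB]; rintro rfl; simp at h
  | succ n ih =>
    push_cast at h
    rw [cB, ih _ (by omega), ih _ (by omega)]

lemma cB_choose (n k : ℕ) : cB n (2 * k - n) = Nat.choose n k := by
  induction n generalizing k with
  | zero =>
    rcases k with _ | k
    · simp [cB]
    · simp [cB]; omega
  | succ n ih =>
    rcases k with _ | k
    · rw [cB, cB_low _ _ (by push_cast; omega)]
      have := ih 0
      simp at this ⊢
      exact this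
    · rw [cB, Nat.choose_succ_succ', ← ih k, ← ih (k+1)]
      congr 2 <;> push_cast <;> ring

noncomputable def aL (n : ℕ) (b : ℤ) : L := wx ^ n * (cB n b : L)

lemma fSer_eq : fSer = PowerSeries.mk fun n => aL n 0 := by
  ext1 n
  rw [PowerSeries.coeff_mk]
  rcases Nat.even_or_odd' n with ⟨k, rfl | rfl⟩
  · rw [fSer_coeff_even, aL, ← cB_choose]
    congr 3; push_cast; ring
  · rw [fSer_coeff_odd, aL, cB_odd _ _ (by push_cast; omega)]; simp

lemma sL_eq (n : ℕ) (b : ℤ) :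
    sL n b = ∑ p ∈ Finset.HasAntidiagonal.antidiagonal n, aL p.1 b * vL p.2 := by
  induction n generalizing b with
  | zero =>
    simp only [sL, Finset.Nat.antidiagonal_zero, Finset.sum_singleton, aL, vL, cB]
    split_ifs <;> simp
  | succ n ih =>
    rw [Finset.Nat.sum_antidiagonal_succ]
    have h1 : ∑ p ∈ Finset.HasAntidiagonal.antidiagonal n, aL (p.1+1) b * vL p.2
        = wx * (sL n (b-1) + sL n (b+1)) := by
      rw [ih, ih, ← Finset.sum_add_distrib, Finset.mul_sum]
      refine Finset.sum_congr rfl fun p _ => ?_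
      simp only [aL, cB]
      push_cast
      ring
    rw [h1]
    by_cases hb : b = 0
    · subst hb
      simp only [sL, vL, aL, cB]
      simp
    · simp only [sL, aL, cB, hb, if_false]
      simp

noncomputable def SSer : L⟦X⟧ := PowerSeries.mk fun n => sL n 0
noncomputable def VSer : L⟦X⟧ := PowerSeries.mk vL

lemma SSer_eq : SSer = fSer * VSer := by
  ext1 n
  rw [fSer_eq, PowerSeries.coeff_mul]
  simp only [SSer, VSer, PowerSeries.coeff_mk]
  exact sL_eq n 0

def NonPos : Subring L where
  carrier := {f | ∀ a : ℤ, 0 < a → f.coeff a = 0}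
  zero_mem' := by intro a _; simp
  one_mem' := by
    intro a ha
    rw [← T_zero, T_apply, if_neg (by omega)]
  add_mem' := by
    intro f g hf hg a ha
    simp [hf a ha, hg a ha]
  neg_mem' := by
    intro f hf a ha
    simp [hf a ha]
  mul_mem' := by
    intro f g hf hg a ha
    classical
    rw [AddMonoidAlgebra.coeff_mul]
    refine Finset.sum_eq_zero fun x hx => Finset.sum_eq_zero fun y hy => ?_
    beta_reduce
    split_ifs with h
    · by_cases hx0 : 0 < x
      · simp [hf x hx0]
      · simp [hg y (by omega)]
    · rfl

lemma mem_NonPos (f : L) : f ∈ NonPos ↔ ∀ a : ℤ, 0 < a → f.coeff a = 0 := Iff.rfl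

lemma vL_nonpos (n : ℕ) : vL n ∈ NonPos := by
  cases n with
  | zero => exact one_mem _
  | succ n =>
    intro a ha
    simp only [vL, AddMonoidAlgebra.coeff_sub, Finsupp.sub_apply, posPart_coeff, if_pos ha, sub_self]

lemma gneg_nonpos (n : ℕ) : PowerSeries.coeff n (gSer (-2)) ∈ NonPos := by
  intro a ha
  apply gSer_coeff_coeff
  intro k hk h
  omega

lemma beta_nonpos (n : ℕ) : PowerSeries.coeff n beta ∈ NonPos := by
  obtain ⟨q, hq⟩ := beta_coeff_C n 1
  rw [pow_one] at hq
  rw [hq]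
  intro a ha
  rw [LaurentPolynomial.C_apply, if_neg (by omega)]

lemma mul_nonpos (f g : L⟦X⟧) (hf : ∀ n, PowerSeries.coeff n f ∈ NonPos)
    (hg : ∀ n, PowerSeries.coeff n g ∈ NonPos) (n : ℕ) : PowerSeries.coeff n (f * g) ∈ NonPos := by
  rw [PowerSeries.coeff_mul]
  exact Subring.sum_mem _ fun p _ => mul_mem (hf _) (hg _)

noncomputable def QSer : L⟦X⟧ := ((1 + beta) * gSer (-2)) * VSer

lemma Q_nonpos (n : ℕ) : PowerSeries.coeff n QSer ∈ NonPos := by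
  refine mul_nonpos _ _ (mul_nonpos _ _ (fun m => ?_) gneg_nonpos) (fun m => ?_) n
  · rw [map_add]
    refine add_mem ?_ (beta_nonpos m)
    rw [PowerSeries.coeff_one]
    split_ifs
    · exact one_mem _
    · exact zero_mem _
  · simpa [VSer] using vL_nonpos m

lemma S_eq_gQ : SSer = gSer 2 * QSer := by
  rw [SSer_eq, fSer_factor, QSer, mul_assoc]

lemma gSer_zero (e : ℤ) : PowerSeries.coeff 0 (gSer e) = 1 := by
  rw [PowerSeries.coeff_zero_eq_constantCoeff_apply]
  exact subst_constantCoeff _ (gconst e)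

lemma Q_zero : PowerSeries.coeff 0 QSer = 1 := by
  have h1 := gSer_zero (-2)
  rw [PowerSeries.coeff_zero_eq_constantCoeff_apply] at h1 ⊢
  simp [QSer, h1, beta_const, VSer, vL]

lemma Q_succ (n : ℕ) : PowerSeries.coeff (n+1) QSer = 0 := by
  induction n using Nat.strong_induction_on with
  | _ n ih =>
  have h := congrArg (PowerSeries.coeff (n+1)) S_eq_gQ
  rw [PowerSeries.coeff_mul, Finset.Nat.sum_antidiagonal_succ, gSer_zero, one_mul,
    Finset.sum_eq_single (n, 0)] at h
  · simp only [Q_zero, mul_one] at h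
    refine LaurentPolynomial.ext fun a => ?_
    rcases lt_or_ge 0 a with ha | ha
    · exact Q_nonpos _ a ha
    · have h2 := congrArg (fun f : L => f.coeff a) h
      simp only [AddMonoidAlgebra.coeff_add, Finsupp.add_apply] at h2
      rw [gSer_coeff_coeff 2 (n+1) a (by intro k hk h; omega), add_zero] at h2
      rw [← h2]
      simp [SSer, sL, posPart_coeff, ha]
  · rintro ⟨p, q⟩ hp hne
    rw [Finset.HasAntidiagonal.mem_antidiagonal] at hp
    simp only at hp
    rcases q with _ | q
    · exact absurd (by simp at hp; simp [hp]) hne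
    · rw [ih q (by omega), mul_zero]
  · intro h; exfalso; apply h; simp

lemma S_eq_g : SSer = gSer 2 := by
  have : QSer = 1 := by
    ext1 n
    rcases n with _ | n
    · rw [Q_zero]; simp
    · rw [Q_succ]; simp [PowerSeries.coeff_one]
  rw [S_eq_gQ, this, mul_one]

/-! ### The walk recursion -/

abbrev Wk (n : ℕ) (p : ℤ × ℤ) :=
  {w : Fin (n+1) → ℤ × ℤ // IsSlitWalk diagSteps n w ∧ w (Fin.last n) = p}

def dF : Finset (ℤ × ℤ) := {(1,1), (1,-1), (-1,1), (-1,-1)}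

lemma mem_dF (d : ℤ × ℤ) : d ∈ dF ↔ d ∈ diagSteps := by
  simp [dF, diagSteps]

lemma Wk_mem_slit (n : ℕ) (p : ℤ × ℤ) (hp : p ∈ slitH) : IsEmpty (Wk (n+1) p) := by
  constructor
  rintro ⟨w, ⟨_, _, h3⟩, h4⟩
  exact h3 (Fin.last (n+1)) (by simp) (h4 ▸ hp)

lemma sig_ext (n : ℕ) (p : ℤ × ℤ) (x y : Σ d : dF, Wk n (p - d.1)) (h1 : x.1.1 = y.1.1)
    (h2 : x.2.1 = y.2.1) : x = y := by
  obtain ⟨⟨d, hd⟩, ⟨w, hw⟩⟩ := x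
  obtain ⟨⟨d', hd'⟩, ⟨w', hw'⟩⟩ := y
  simp only at h1 h2
  subst h1 h2
  rfl

def WkEquiv (n : ℕ) (p : ℤ × ℤ) (hp : p ∉ slitH) :
    Wk (n+1) p ≃ Σ d : dF, Wk n (p - d.1) where
  toFun w := ⟨⟨p - w.1 (Fin.last n).castSucc, by
      rw [mem_dF]
      have := w.2.1.2.1 (Fin.last n)
      rwa [Fin.succ_last, w.2.2] at this⟩,
    ⟨fun m => w.1 m.castSucc, ⟨w.2.1.1, fun m => by
      have := w.2.1.2.1 m.castSucc
      rwa [Fin.succ_castSucc] at this, fun m hm => w.2.1.2.2 m.castSucc (by simpa using hm)⟩,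
      by simp⟩⟩
  invFun x := ⟨Fin.snoc (α := fun _ => ℤ × ℤ) x.2.1 p, ⟨by
      have h := x.2.2.1.1
      rw [← Fin.castSucc_zero, Fin.snoc_castSucc]; exact h, fun m => by
      refine Fin.lastCases ?_ (fun m => ?_) m
      · rw [Fin.succ_last, Fin.snoc_last, Fin.snoc_castSucc, x.2.2.2, ← mem_dF]
        simp
      · rw [Fin.succ_castSucc, Fin.snoc_castSucc, Fin.snoc_castSucc]
        exact x.2.2.1.2.1 m, fun m => by
      refine Fin.lastCases ?_ (fun m => ?_) m
      · intro _; rw [Fin.snoc_last]; exact hp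
      · intro hm; rw [Fin.snoc_castSucc]; exact x.2.2.1.2.2 m (by simpa using hm)⟩, by
      rw [Fin.snoc_last]⟩
  left_inv w := by
    apply Subtype.ext
    funext m
    refine Fin.lastCases ?_ (fun m => ?_) m
    · simp [w.2.2]
    · simp
  right_inv x := by
    apply sig_ext
    · have h := x.2.2.2
      simp [h]
    · funext m
      simp

lemma Wk_finite (n : ℕ) (p : ℤ × ℤ) : Finite (Wk n p) := by
  induction n generalizing p with
  | zero =>
    have : Subsingleton (Wk 0 p) := by
      constructor
      rintro ⟨w, hw, _⟩ ⟨w', hw', _⟩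
      apply Subtype.ext
      funext m
      have : m = 0 := Fin.ext (by simp)
      subst this
      exact hw.1.trans hw'.1.symm
    infer_instance
  | succ n ih =>
    by_cases hp : p ∈ slitH
    · have := Wk_mem_slit n p hp
      infer_instance
    · exact Finite.of_equiv _ (WkEquiv n p hp).symm

lemma count_zero (a b : ℤ) : slitCount diagSteps a b 0 = if a = 0 ∧ b = 0 then 1 else 0 := by
  rw [slitCount]
  split_ifs with h
  · obtain ⟨rfl, rfl⟩ := h
    rw [Nat.card_eq_one_iff_unique]
    refine ⟨⟨?_⟩, ⟨⟨fun _ => (0,0), ⟨rfl, fun m => m.elim0, fun m hm => ?_⟩, rfl⟩⟩⟩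
    · rintro ⟨w, hw, _⟩ ⟨w', hw', _⟩
      apply Subtype.ext
      funext m
      have : m = 0 := Fin.ext (by simp)
      subst this
      exact hw.1.trans hw'.1.symm
    · omega
  · rw [Nat.card_eq_zero]
    left
    constructor
    rintro ⟨w, hw, hw'⟩
    have h1 := hw.1
    have h2 : w 0 = (a, b) := hw'
    rw [h1] at h2
    simp at h2
    exact h ⟨h2.1.symm, h2.2.symm⟩

lemma count_slit (n : ℕ) (a : ℤ) (ha : a ≤ 0) : slitCount diagSteps a 0 (n+1) = 0 := by
  rw [slitCount, Nat.card_eq_zero]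
  exact Or.inl (Wk_mem_slit n (a, 0) ⟨rfl, ha⟩)

lemma count_succ (n : ℕ) (a b : ℤ) (h : ¬ (b = 0 ∧ a ≤ 0)) :
    slitCount diagSteps a b (n+1) = slitCount diagSteps (a-1) (b-1) n +
      slitCount diagSteps (a-1) (b+1) n + slitCount diagSteps (a+1) (b-1) n +
      slitCount diagSteps (a+1) (b+1) n := by
  have hp : (a, b) ∉ slitH := h
  have hf := fun p => Wk_finite n p
  have e : slitCount diagSteps a b (n+1) = ∑ d : dF, Nat.card (Wk n ((a,b) - d.1)) := by
    rw [slitCount, Nat.card_congr (WkEquiv n (a,b) hp), Nat.card_sigma]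
  rw [e, Finset.sum_coe_sort dF (fun d => Nat.card (Wk n ((a,b) - d)))]
  rw [dF, Finset.sum_insert (by decide), Finset.sum_insert (by decide),
    Finset.sum_insert (by decide), Finset.sum_singleton]
  simp only [slitCount, Prod.mk_sub_mk, sub_neg_eq_add]
  ring

lemma coeff_T_mul (f : L) (k a : ℤ) : (T k * f).coeff a = f.coeff (a - k) := by
  rw [T, AddMonoidAlgebra.coeff_single_mul_apply]
  simp [sub_eq_neg_add]

lemma coeff_wx_mul (f : L) (a : ℤ) : (wx * f).coeff a = f.coeff (a-1) + f.coeff (a+1) := by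
  rw [wx, add_mul, AddMonoidAlgebra.coeff_add, Finsupp.add_apply, coeff_T_mul, coeff_T_mul,
    sub_neg_eq_add]

lemma sL_coeff (n : ℕ) (a b : ℤ) : (sL n b).coeff a = (slitCount diagSteps a b n : ℚ) := by
  induction n generalizing a b with
  | zero =>
    rw [count_zero, sL]
    by_cases hb : b = 0
    · rw [if_pos hb, ← T_zero, T_apply]
      simp [hb, eq_comm]
    · simp [hb]
  | succ n ih =>
    have hw : (wx * (sL n (b-1) + sL n (b+1))).coeff a = ((slitCount diagSteps (a-1) (b-1) n +
      slitCount diagSteps (a-1) (b+1) n + slitCount diagSteps (a+1) (b-1) n +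
      slitCount diagSteps (a+1) (b+1) n : ℕ) : ℚ) := by
      rw [coeff_wx_mul]
      simp only [AddMonoidAlgebra.coeff_add, Finsupp.add_apply, ih]
      push_cast
      ring
    rw [sL]
    by_cases hb : b = 0
    · rw [if_pos hb, posPart_coeff, hw]
      by_cases ha : 0 < a
      · rw [if_pos ha, count_succ _ _ _ (by omega)]
      · rw [if_neg ha, hb, count_slit _ _ (by omega)]; simp
    · rw [if_neg hb, hw, count_succ _ _ _ (by omega)]

lemma main_q (i n : ℕ) (hn : i ≤ n) : (slitCount diagSteps (2 * i) 0 (2 * n) : ℚ)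
    = (Nat.centralBinom i : ℚ) / 4 ^ i * (4 ^ n * eCoef i n) := by
  rw [← sL_coeff, ← gSer_main n i hn, ← S_eq_g, SSer, PowerSeries.coeff_mk]

end SlitProof

/-- for walks with diagonal steps, for `i ≥ 1` and `n ≥ i`,
`a_{2i,0}(2n) = (i/n)·binom(2i,i)·binom(2n,n−i)·4^{n−i}`
(stated multiplied by `n` to stay in ℕ). -/
theorem diag_slit_count_axis (i n : ℕ) (hi : 1 ≤ i) (hn : i ≤ n) :
    n * slitCount diagSteps (2 * i) 0 (2 * n)
      = i * Nat.choose (2 * i) i * Nat.choose (2 * n) (n - i) * 4 ^ (n - i) := by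
  have h := SlitProof.main_q i n hn
  have h2 := SlitProof.eCoef_formula i n
  have h3 : Nat.choose (2 * n) (n - i) = Nat.choose (2 * n) (n + i) := by
    rw [← Nat.choose_symm (by omega : n + i ≤ 2 * n)]
    congr 1
    omega
  have h4 : (4 : ℚ) ^ n = 4 ^ (n - i) * 4 ^ i := by
    rw [← pow_add]; congr 1; omega
  rw [h3]
  have goal : (n : ℚ) * (slitCount diagSteps (2 * i) 0 (2 * n) : ℚ)
      = i * (Nat.choose (2 * i) i : ℚ) * Nat.choose (2 * n) (n + i) * 4 ^ (n - i) := by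
    rw [h, h4, Nat.centralBinom]
    field_simp
    linear_combination (Nat.choose (2 * i) i : ℚ) * h2
  exact_mod_cast goal
end
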